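/- There exists an absolute constant c > 0 such that the following holds. Let A be a finite nonempty set of scalars and L a finite nonempty subset of the affine group, and let Im_L(A) := {a·x + b : (a,b) ∈ L, x ∈ A}. If the field is R, then |Im_L(A)| ≥ c·min{ |A|², (|A|²·|L|⁴/E(L))^(1/3) }. If the field is F_p for a prime p, then |Im_L(A)| ≥ c·min{ p, |A|², (|A|³·|L|⁴/E(L))^(1/4) }. -/

import Mathlib

/-- Composition in `Aff(F)` of transformations `(a,b)`, acting as `x ↦ ax + b`:
`(a,b)∘(c,d) = (ac, ad + b)`. -/
def acomp {F : Type*} [Field F] (l m : F × F) : F × F := (l.1 * m.1, l.1 * m.2 + l.2)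

/-- Inverse in `Aff(F)` of a transformation `(a,b)` with `a ≠ 0`. -/
noncomputable def ainv {F : Type*} [Field F] (l : F × F) : F × F :=
  (l.1⁻¹, -(l.1⁻¹ * l.2))

/-- The energy of a finite set of affine transformations:
`E(L) = #{(l₁,l₂,l₁',l₂') ∈ L⁴ : l₁⁻¹∘l₂ = l₁'⁻¹∘l₂'}`. -/
noncomputable def affEnergy {F : Type*} [Field F] (L : Finset (F × F)) : ℕ :=
  Set.ncard {q : (F × F) × (F × F) × (F × F) × (F × F) |
    q.1 ∈ L ∧ q.2.1 ∈ L ∧ q.2.2.1 ∈ L ∧ q.2.2.2 ∈ L ∧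
    acomp (ainv q.1) q.2.1 = acomp (ainv q.2.2.1) q.2.2.2}

/-- The image set `Im_L(A) = {a·x + b : (a,b) ∈ L, x ∈ A}`. -/
noncomputable def imSet {F : Type*} [Field F] [DecidableEq F]
    (L : Finset (F × F)) (A : Finset F) : Finset F :=
  (L ×ˢ A).image fun q => q.1.1 * q.2 + q.1.2

/-!
Call an affine map `k`-rich if it sends at least `k` points of `A` into `A`. A coincidence
`l x = l' x'` says that `l⁻¹ ∘ l'` sends `x'` to `x`, so by Cauchy–Schwarz `(|L| |A|)²` is at most
`|Im_L(A)|` times the sum of the richness of `l⁻¹ ∘ l'` over all pairs. Quotients of richness below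
`|A|² / (2 |Im_L(A)|)` account for at most half of this sum. For the others a second application of
Cauchy–Schwarz separates the energy of `L` from the sum of the squares of the richness over all rich
maps, which is estimated dyadically from a bound on the number of `k`-rich maps.

Over an ordered field there are `O(|A|⁴ / k³)` such maps. Cut `A` into consecutive blocks of size
about `8 |A| / k`: since affine maps are monotone or antitone, a `k`-rich map has at least `k / 2`
pairs of points in a common block with images in a common block, and two points together with
their images determine the map.

Over `𝔽_p` there are `O(|A|⁵ / k⁴)` such maps as long as `k ≥ 2 |A|² / p`. A map `g` and a point `x`
give a line in each of two families of lines in 3-space, and the pairs `(g, x')`, `(g', x)` with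
`g x = g' x'` are the incidences between the two families. They are bounded by the polynomial method
of Guth and Katz: a random sample of the lines lies on a surface of low degree, which accounts for
all but a negligible part of the incidences. A component containing many lines of both families
is, by a flex polynomial argument, a regulus, whose lines come from collinear pairs `(g, x)` and
hence are few. The argument needs degrees below `p`, which limits it to `|G| |A| ≤ p²` for a set `G`
of rich maps; for larger sets it is applied to a subset and combined with a second moment
computation over all affine maps.
-/

namespace AffineImage

open MvPolynomial

/-! ### Partial derivatives and specialisation of polynomials -/

section Calculus

lemma totalDegree_pos_of_irreducible {σ K : Type*} [Field K] {f : MvPolynomial σ K}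
    (hf : Irreducible f) : 0 < f.totalDegree := by
  refine Nat.pos_of_ne_zero fun hdeg => hf.not_isUnit ?_
  have hC := totalDegree_eq_zero_iff_eq_C.1 hdeg
  refine isUnit_iff_totalDegree_of_isReduced.2 ⟨isUnit_iff_ne_zero.2 fun hcoeff => ?_, hdeg⟩
  exact hf.ne_zero (by rw [hC, hcoeff, C_0])

variable {σ R : Type*} [CommRing R]

lemma eval_aeval_polynomial (w : σ → Polynomial R) (f : MvPolynomial σ R) (u : R) :
    (aeval w f).eval u = eval (fun i => (w i).eval u) f := by
  rw [aeval_def, polynomial_eval_eval₂, ← coe_eval₂Hom, ← eval₂_id, ← coe_eval₂Hom]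
  congr 1
  ext <;> simp

lemma pderiv_pderiv_comm (i j : σ) (f : MvPolynomial σ R) :
    pderiv i (pderiv j f) = pderiv j (pderiv i f) := by
  classical
  let D (k : σ) : Derivation R (MvPolynomial σ R) (MvPolynomial σ R) := pderiv k
  have hbracket : ⁅D i, D j⁆ = 0 := by
    refine derivation_ext fun k => ?_
    simp only [D, Derivation.commutator_apply, pderiv_X, Derivation.zero_apply, Pi.single_apply]
    split_ifs <;> simp
  rw [← sub_eq_zero, ← Derivation.commutator_apply, hbracket, Derivation.zero_apply]

lemma totalDegree_pderiv_le (i : σ) (f : MvPolynomial σ R) :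
    (pderiv i f).totalDegree ≤ f.totalDegree - 1 := by
  refine Finset.sup_le fun m hm => ?_
  rw [mem_support_iff, coeff_pderiv] at hm
  have hle := le_totalDegree (mem_support_iff.2 (left_ne_zero_of_mul hm))
  rw [Finsupp.sum_add_index' (fun _ => rfl) (fun _ _ _ => rfl), Finsupp.sum_single_index rfl] at hle
  exact Nat.le_sub_one_of_lt hle

lemma pderiv_pderiv_self_eq_zero {i : σ} {f : MvPolynomial σ R} (h : degreeOf i f ≤ 1) :
    pderiv i (pderiv i f) = 0 := by
  ext m
  have hcoeff : coeff (m + Finsupp.single i 1 + Finsupp.single i 1) f = 0 := by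
    by_contra hne
    have hle := (monomial_le_degreeOf i (mem_support_iff.2 hne)).trans h
    rw [Finsupp.add_apply, Finsupp.add_apply, Finsupp.single_eq_same] at hle
    omega
  rw [coeff_pderiv, coeff_pderiv, hcoeff, zero_mul, zero_mul, coeff_zero]

lemma eq_C_of_forall_pderiv_eq_zero [NoZeroDivisors R] {f : MvPolynomial σ R}
    (hchar : ∀ k : ℕ, 0 < k → k ≤ f.totalDegree → (k : R) ≠ 0) (h : ∀ i, pderiv i f = 0) :
    f = C (coeff 0 f) := by
  classical
  ext m
  rw [coeff_C]
  split_ifs with hm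
  · rw [hm]
  obtain ⟨i, hi⟩ : ∃ i, m i ≠ 0 := Finsupp.ne_iff.1 (Ne.symm hm)
  by_contra hne
  have hcoeff := congrArg (coeff (m - Finsupp.single i 1)) (h i)
  have hadd : m - Finsupp.single i 1 + Finsupp.single i 1 = m :=
    tsub_add_cancel_of_le (Finsupp.single_le_iff.2 (Nat.one_le_iff_ne_zero.2 hi))
  have hexp : (m - Finsupp.single i 1 : σ →₀ ℕ) i + 1 = m i := by
    simpa using DFunLike.congr_fun hadd i
  rw [coeff_pderiv, coeff_zero, hadd, ← Nat.cast_succ, Nat.succ_eq_add_one, hexp] at hcoeff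
  refine hchar (m i) (Nat.pos_of_ne_zero hi) ?_ ((mul_eq_zero.1 hcoeff).resolve_left hne)
  exact (monomial_le_degreeOf i (mem_support_iff.2 hne)).trans (degreeOf_le_totalDegree f i)

lemma derivative_aeval [Fintype σ] (w : σ → Polynomial R) (f : MvPolynomial σ R) :
    (aeval w f).derivative = ∑ i, aeval w (pderiv i f) * (w i).derivative := by
  classical
  induction f using MvPolynomial.induction_on with
  | C a => simp
  | add p q hp hq => simp [hp, hq, add_mul, Finset.sum_add_distrib]
  | mul_X p n hp =>
    have leibniz : ∀ i, aeval w (pderiv i (p * X n)) * (w i).derivative =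
        aeval w (pderiv i p) * (w i).derivative * w n +
          if i = n then aeval w p * (w n).derivative else 0 := by
      intro i
      rcases eq_or_ne i n with rfl | hin
      · simp only [pderiv_mul, pderiv_X_self, map_add, map_mul, aeval_X, map_one, if_true]
        ring
      · simp only [pderiv_mul, pderiv_X_of_ne hin.symm, map_add, map_mul, aeval_X, map_zero,
          if_neg hin]
        ring
    rw [Finset.sum_congr rfl fun i _ => leibniz i, Finset.sum_add_distrib, ← Finset.sum_mul, ← hp,
      Finset.sum_ite_eq' Finset.univ n, if_pos (Finset.mem_univ n), map_mul, aeval_X,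
      Polynomial.derivative_mul]

/-- The univariate polynomial obtained from `f` by freezing all variables but the `i`-th one at
the coordinates of `v`. -/
noncomputable def alongCoord [DecidableEq σ] (v : σ → R) (i : σ) :
    MvPolynomial σ R →ₐ[R] Polynomial R :=
  aeval (Function.update (fun k => Polynomial.C (v k)) i Polynomial.X)

variable [DecidableEq σ]

lemma eval_alongCoord (v : σ → R) (i : σ) (f : MvPolynomial σ R) (u : R) :
    (alongCoord v i f).eval u = eval (Function.update v i u) f := by
  rw [alongCoord, eval_aeval_polynomial]
  congr 2
  ext k
  rcases eq_or_ne k i with rfl | hk <;> simp [*]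

lemma natDegree_alongCoord_le (v : σ → R) (i : σ) (f : MvPolynomial σ R) :
    (alongCoord v i f).natDegree ≤ degreeOf i f := by
  rw [alongCoord, aeval_def, eval₂_eq]
  refine Polynomial.natDegree_sum_le_of_forall_le _ _ fun m hm => ?_
  rw [Polynomial.algebraMap_eq]
  refine (Polynomial.natDegree_C_mul_le _ _).trans ?_
  refine le_trans ?_ (monomial_le_degreeOf i hm)
  refine (Polynomial.natDegree_prod_le _ _).trans ?_
  have factor_le : ∀ k ∈ m.support,
      ((Function.update (fun k => Polynomial.C (v k)) i Polynomial.X k) ^ m k).natDegree ≤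
        if i = k then m i else 0 := by
    intro k _
    refine Polynomial.natDegree_pow_le.trans ?_
    rcases eq_or_ne i k with rfl | hk
    · rw [Function.update_self, if_pos rfl]
      exact (Nat.mul_le_mul_left _ Polynomial.natDegree_X_le).trans_eq (mul_one _)
    · simp [Function.update_of_ne hk.symm]
  refine (Finset.sum_le_sum factor_le).trans ?_
  rw [Finset.sum_ite_eq]
  split_ifs <;> simp

lemma derivative_alongCoord [Finite σ] (v : σ → R) (i : σ) (f : MvPolynomial σ R) :
    (alongCoord v i f).derivative = alongCoord v i (pderiv i f) := by
  have := Fintype.ofFinite σ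
  rw [alongCoord, derivative_aeval, Finset.sum_eq_single i]
  · simp
  · intro k _ hk
    simp [Function.update_of_ne hk]
  · simp

end Calculus

section Elimination

lemma totalDegree_det_le {σ R ι : Type*} [CommRing R] [Fintype ι] [DecidableEq ι] {D : ℕ}
    (M : Matrix ι ι (MvPolynomial σ R)) (h : ∀ i j, (M i j).totalDegree ≤ D) :
    M.det.totalDegree ≤ Fintype.card ι * D := by
  rw [Matrix.det_apply]
  refine totalDegree_finsetSum_le fun τ _ => ?_
  have prod_le : (∏ i, M (τ i) i).totalDegree ≤ Fintype.card ι * D :=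
    calc (∏ i, M (τ i) i).totalDegree ≤ ∑ i, (M (τ i) i).totalDegree := totalDegree_finsetProd _ _
      _ ≤ ∑ _i : ι, D := Finset.sum_le_sum fun i _ => h (τ i) i
      _ = Fintype.card ι * D := by simp
  rcases Int.units_eq_one_or (Equiv.Perm.sign τ) with hτ | hτ <;> simpa [hτ] using prod_le

lemma totalDegree_coeff_finSuccEquiv_le {R : Type*} [CommSemiring R] {n : ℕ}
    (f : MvPolynomial (Fin (n + 1)) R) (i : ℕ) :
    ((finSuccEquiv R n f).coeff i).totalDegree ≤ f.totalDegree := by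
  by_cases h : (finSuccEquiv R n f).coeff i = 0
  · simp [h]
  · exact le_of_add_le_left (totalDegree_coeff_finSuccEquiv_add_le f i h)

lemma natDegree_finSuccEquiv_le_totalDegree {R : Type*} [CommSemiring R] {n : ℕ}
    (f : MvPolynomial (Fin (n + 1)) R) : (finSuccEquiv R n f).natDegree ≤ f.totalDegree :=
  (natDegree_finSuccEquiv f).trans_le (degreeOf_le_totalDegree f 0)

lemma totalDegree_resultant_finSuccEquiv_le {R : Type*} [CommRing R] {n : ℕ}
    (f g : MvPolynomial (Fin (n + 1)) R) :
    ((finSuccEquiv R n f).resultant (finSuccEquiv R n g)).totalDegree ≤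
      (f.totalDegree + g.totalDegree) ^ 2 := by
  have entry_le : ∀ i j, ((finSuccEquiv R n f).sylvester (finSuccEquiv R n g)
      (finSuccEquiv R n f).natDegree (finSuccEquiv R n g).natDegree i j).totalDegree ≤
      f.totalDegree + g.totalDegree := by
    intro i j
    simp only [Polynomial.sylvester, Matrix.of_apply]
    refine Fin.addCases (fun j => ?_) (fun j => ?_) j
    · simp only [Fin.addCases_left]
      split_ifs
      · exact (totalDegree_coeff_finSuccEquiv_le g _).trans (Nat.le_add_left _ _)
      · simp
    · simp only [Fin.addCases_right]
      split_ifs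
      · exact (totalDegree_coeff_finSuccEquiv_le f _).trans (Nat.le_add_right _ _)
      · simp
  refine (totalDegree_det_le _ entry_le).trans ?_
  rw [Fintype.card_fin, sq]
  gcongr
  · exact natDegree_finSuccEquiv_le_totalDegree f
  · exact natDegree_finSuccEquiv_le_totalDegree g

lemma resultant_ne_zero_of_irreducible_of_not_dvd {R : Type*} [CommRing R] [IsDomain R]
    [IsGCDMonoid R] {f g : Polynomial R} (hf : Irreducible f) (hdeg : f.natDegree ≠ 0)
    (hfg : ¬ f ∣ g) : f.resultant g ≠ 0 := by
  have hprim : f.IsPrimitive := hf.isPrimitive hdeg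
  let toFrac := algebraMap R (FractionRing R)
  have hcop : IsCoprime (f.map toFrac) (g.map toFrac) := by
    have hirr : Irreducible (f.map toFrac) :=
      hprim.irreducible_iff_irreducible_map_fraction_map.1 hf
    rw [hirr.coprime_iff_not_dvd]
    exact fun h => hfg (hprim.dvd_of_fraction_map_dvd_fraction_map h)
  have hinj : Function.Injective toFrac := FaithfulSMul.algebraMap_injective R (FractionRing R)
  intro hzero
  have hmap := Polynomial.resultant_map_map (m := f.natDegree) (n := g.natDegree) (f := f) (g := g)
    toFrac
  rw [hzero, map_zero, ← Polynomial.natDegree_map_eq_of_injective hinj f,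
    ← Polynomial.natDegree_map_eq_of_injective hinj g, Polynomial.resultant_eq_zero_iff] at hmap
  exact hmap.2 hcop

variable {K : Type*} [Field K]

lemma exists_eliminant {n : ℕ} {f g : MvPolynomial (Fin (n + 1)) K} (hf : Irreducible f)
    (hfg : ¬ f ∣ g) :
    ∃ r : MvPolynomial (Fin n) K, r ≠ 0 ∧ r.totalDegree ≤ (f.totalDegree + g.totalDegree) ^ 2 ∧
      ∀ (z : K) (v : Fin n → K), eval (Fin.cons z v) f = 0 → eval (Fin.cons z v) g = 0 →
        eval v r = 0 := by
  set F := finSuccEquiv K n f with hF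
  set G := finSuccEquiv K n g with hG
  have hFirr : Irreducible F := (MulEquiv.irreducible_iff (finSuccEquiv K n)).2 hf
  have hFG : ¬ F ∣ G := fun h => hfg ((map_dvd_iff (finSuccEquiv K n)).1 h)
  by_cases hdeg : F.natDegree = 0
  · obtain ⟨r, hr⟩ := Polynomial.natDegree_eq_zero.1 hdeg
    refine ⟨r, ?_, ?_, fun z v hfv _ => ?_⟩
    · rintro rfl
      exact hFirr.ne_zero (by rw [← hr, Polynomial.C_0])
    · calc r.totalDegree = (F.coeff 0).totalDegree := by rw [← hr, Polynomial.coeff_C_zero]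
        _ ≤ f.totalDegree + g.totalDegree :=
          (totalDegree_coeff_finSuccEquiv_le f 0).trans (Nat.le_add_right _ _)
        _ ≤ (f.totalDegree + g.totalDegree) ^ 2 := Nat.le_self_pow two_ne_zero _
    · rwa [eval_eq_eval_mv_eval', ← hF, ← hr, Polynomial.map_C, Polynomial.eval_C] at hfv
  · refine ⟨F.resultant G, resultant_ne_zero_of_irreducible_of_not_dvd hFirr hdeg hFG,
      totalDegree_resultant_finSuccEquiv_le f g, fun z v hfv hgv => ?_⟩
    obtain ⟨p, q, -, -, hpq⟩ :=
      Polynomial.exists_mul_add_mul_eq_C_resultant F G le_rfl le_rfl (Or.inl hdeg)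
    have hpq_eval := congrArg (fun P => (P.map (eval v)).eval z) hpq
    simp only [Polynomial.map_add, Polynomial.map_mul, Polynomial.eval_add, Polynomial.eval_mul,
      Polynomial.map_C, Polynomial.eval_C] at hpq_eval
    rw [hF, hG, ← eval_eq_eval_mv_eval', ← eval_eq_eval_mv_eval', hfv, hgv] at hpq_eval
    simpa using hpq_eval.symm

lemma card_le_totalDegree_of_eval_eq_zero {σ : Type*} [Infinite K] {r : MvPolynomial σ K}
    (hr : r ≠ 0) (j : σ) (S : Finset K) (h : ∀ v : σ → K, v j ∈ S → eval v r = 0) :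
    S.card ≤ r.totalDegree := by
  classical
  obtain ⟨v, hv⟩ : ∃ v, eval v r ≠ 0 := by
    by_contra! hzero
    exact hr (MvPolynomial.funext (by simpa using hzero))
  have hne : alongCoord v j r ≠ 0 := by
    intro hzero
    have heval := eval_alongCoord v j r (v j)
    rw [hzero, Polynomial.eval_zero, Function.update_eq_self] at heval
    exact hv heval.symm
  calc S.card ≤ (alongCoord v j r).natDegree :=
        Polynomial.card_le_degree_of_subset_roots fun a ha => by
          rw [Polynomial.mem_roots hne, Polynomial.IsRoot, eval_alongCoord]
          exact h _ (by simpa using ha)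
    _ ≤ degreeOf j r := natDegree_alongCoord_le v j r
    _ ≤ r.totalDegree := degreeOf_le_totalDegree r j

end Elimination

/-! ### Lines in two families and the surfaces containing them -/

/-- A non-vertical line in the affine 3-space with coordinates `(Z, W 0, W 1)` along which one of
the two horizontal coordinates is constant. Such lines form two families, indexed by the free
coordinate `i : Fin 2`: on the line `W i` runs over `K`, the other horizontal coordinate equals
`base`, and `Z = slope * W i + height`. -/
@[ext]
structure SliceLine (K : Type*) where
  /-- The constant value of the other horizontal coordinate. -/
  base : K
  /-- The derivative of `Z` with respect to the free coordinate. -/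
  slope : K
  /-- The value of `Z` where the free coordinate vanishes. -/
  height : K
deriving DecidableEq

section Lines

variable {K : Type*} [Field K]

/-- The point of the line `l` of the `i`-th family at which the free coordinate equals `u`. -/
def linePoint (i : Fin 2) (l : SliceLine K) (u : K) : Fin 3 → K :=
  Fin.cons (l.slope * u + l.height) (Function.update (fun _ => l.base) i u)

lemma rev_ne_self (i : Fin 2) : i.rev ≠ i := by
  fin_cases i <;> decide

lemma forall_fin_three_of_rev {P : Fin 3 → Prop} (i : Fin 2) (h0 : P 0) (hfree : P i.succ)
    (hfixed : P i.rev.succ) (k : Fin 3) : P k := by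
  fin_cases i <;> fin_cases k <;> assumption

lemma linePoint_zero (i : Fin 2) (l : SliceLine K) (u : K) :
    linePoint i l u 0 = l.slope * u + l.height :=
  rfl

lemma linePoint_succ (i : Fin 2) (l : SliceLine K) (u : K) : linePoint i l u i.succ = u := by
  simp [linePoint]

lemma linePoint_rev_succ (i : Fin 2) (l : SliceLine K) (u : K) :
    linePoint i l u i.rev.succ = l.base := by
  simp [linePoint, rev_ne_self]

/-- The restriction of a polynomial to a line of the `i`-th family, parametrised by the free
coordinate. -/
noncomputable def restrict (i : Fin 2) (l : SliceLine K) :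
    MvPolynomial (Fin 3) K →ₐ[K] Polynomial K :=
  aeval (Fin.cons (Polynomial.C l.slope * Polynomial.X + Polynomial.C l.height)
    (Function.update (fun _ => Polynomial.C l.base) i Polynomial.X))

/-- The line `l` of the `i`-th family lies on the surface `f = 0`. -/
def VanishesOn (i : Fin 2) (f : MvPolynomial (Fin 3) K) (l : SliceLine K) : Prop :=
  restrict i l f = 0

lemma eval_restrict (i : Fin 2) (l : SliceLine K) (f : MvPolynomial (Fin 3) K) (u : K) :
    (restrict i l f).eval u = eval (linePoint i l u) f := by
  rw [restrict, eval_aeval_polynomial]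
  congr 2
  ext k
  refine Fin.cases ?_ (fun k => ?_) k
  · simp [linePoint]
  · rcases eq_or_ne k i with rfl | hk <;> simp [linePoint, *]

lemma VanishesOn.eval_linePoint {i : Fin 2} {f : MvPolynomial (Fin 3) K} {l : SliceLine K}
    (h : VanishesOn i f l) (u : K) : eval (linePoint i l u) f = 0 := by
  rw [← eval_restrict, h, Polynomial.eval_zero]

lemma natDegree_restrict_le (i : Fin 2) (l : SliceLine K) (f : MvPolynomial (Fin 3) K) :
    (restrict i l f).natDegree ≤ f.totalDegree := by
  refine (aeval_natDegree_le f le_rfl _ (n := 1) fun k => ?_).trans_eq (mul_one _)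
  refine Fin.cases ?_ (fun k => ?_) k
  · exact Polynomial.natDegree_linear_le
  · rcases eq_or_ne k i with rfl | hk <;> simp [*]

lemma derivative_restrict (i : Fin 2) (l : SliceLine K) (f : MvPolynomial (Fin 3) K) :
    (restrict i l f).derivative =
      restrict i l (pderiv i.succ f) + Polynomial.C l.slope * restrict i l (pderiv 0 f) := by
  rw [restrict, derivative_aeval, Fin.sum_univ_succ, Finset.sum_eq_single i, add_comm]
  · simp only [Fin.cons_succ, Function.update_self, Polynomial.derivative_X, mul_one, Fin.cons_zero,
      Polynomial.derivative_add, Polynomial.derivative_C_mul_X, Polynomial.derivative_C, add_zero]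
    ring
  · intro k _ hk
    rw [Fin.cons_succ, Function.update_of_ne hk, Polynomial.derivative_C, mul_zero]
  · simp

lemma vanishesOn_of_totalDegree_lt_card {i : Fin 2} {l : SliceLine K}
    {f : MvPolynomial (Fin 3) K} (S : Finset K) (hS : ∀ u ∈ S, eval (linePoint i l u) f = 0)
    (hcard : f.totalDegree < S.card) : VanishesOn i f l := by
  refine Polynomial.eq_zero_of_natDegree_lt_card_of_eval_eq_zero' _ S (fun u hu => ?_)
    ((natDegree_restrict_le i l f).trans_lt hcard)
  rw [eval_restrict, hS u hu]

lemma card_le_of_vanishesOn_of_not_dvd [Infinite K] {i : Fin 2} {f g : MvPolynomial (Fin 3) K}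
    (hf : Irreducible f) (hfg : ¬ f ∣ g) {S : Finset (SliceLine K)}
    (hS : Set.InjOn SliceLine.base (S : Set (SliceLine K)))
    (hfS : ∀ l ∈ S, VanishesOn i f l) (hgS : ∀ l ∈ S, VanishesOn i g l) :
    S.card ≤ (f.totalDegree + g.totalDegree) ^ 2 := by
  classical
  obtain ⟨r, hr, hdeg, hzero⟩ := exists_eliminant hf hfg
  rw [← Finset.card_image_of_injOn hS]
  refine (card_le_totalDegree_of_eval_eq_zero hr i.rev _ fun v hv => ?_).trans hdeg
  obtain ⟨l, hl, hbase⟩ := Finset.mem_image.1 hv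
  have hpoint : linePoint i l (v i) = Fin.cons (l.slope * v i + l.height) v := by
    refine funext (forall_fin_three_of_rev i rfl (linePoint_succ i l _) ?_)
    rw [linePoint_rev_succ, hbase, Fin.cons_succ]
  apply hzero (l.slope * v i + l.height) v <;> rw [← hpoint]
  exacts [(hfS l hl).eval_linePoint _, (hgS l hl).eval_linePoint _]

end Lines

section Flex

variable {σ R : Type*} [CommRing R]

/-- The flex polynomial of the plane sections of `f = 0` by the `(i, j)`-coordinate planes: up to
sign, the bordered Hessian determinant of `f` in the variables `X i` and `X j`. -/
noncomputable def flexPoly (i j : σ) (f : MvPolynomial σ R) : MvPolynomial σ R :=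
  pderiv i (pderiv i f) * pderiv j f ^ 2 - 2 * (pderiv i f * pderiv j f * pderiv j (pderiv i f)) +
    pderiv j (pderiv j f) * pderiv i f ^ 2

lemma totalDegree_flexPoly_le (i j : σ) (f : MvPolynomial σ R) :
    (flexPoly i j f).totalDegree ≤ 3 * f.totalDegree := by
  have first_le (k : σ) : (pderiv k f).totalDegree ≤ f.totalDegree :=
    (totalDegree_pderiv_le k f).trans (Nat.sub_le _ _)
  have second_le (k m : σ) : (pderiv k (pderiv m f)).totalDegree ≤ f.totalDegree :=
    ((totalDegree_pderiv_le k _).trans (Nat.sub_le _ _)).trans (first_le m)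
  have sq_le (k m : σ) :
      (pderiv k (pderiv k f) * pderiv m f ^ 2).totalDegree ≤ 3 * f.totalDegree := by
    refine (totalDegree_mul _ _).trans ?_
    have := totalDegree_pow (pderiv m f) 2
    have := first_le m
    have := second_le k k
    omega
  refine (totalDegree_add _ _).trans (max_le ((totalDegree_sub _ _).trans (max_le ?_ ?_)) ?_)
  · exact sq_le i j
  · rw [← map_ofNat (C (σ := σ) (R := R)) 2, ← smul_eq_C_mul]
    refine (totalDegree_smul_le _ _).trans ((totalDegree_mul _ _).trans ?_)
    have := totalDegree_mul (pderiv i f) (pderiv j f)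
    have := first_le i
    have := first_le j
    have := second_le j i
    omega
  · exact sq_le j i

variable {K : Type*} [Field K]

lemma exists_restrict_flexPoly_eq (i : Fin 2) (l : SliceLine K) (f : MvPolynomial (Fin 3) K) :
    ∃ v, restrict i l (flexPoly i.succ 0 f) =
      restrict i l (pderiv 0 f) ^ 2 * (restrict i l f).derivative.derivative +
        (restrict i l f).derivative * v := by
  have second_derivative : (restrict i l f).derivative.derivative =
      restrict i l (pderiv i.succ (pderiv i.succ f)) +
        2 * Polynomial.C l.slope * restrict i l (pderiv 0 (pderiv i.succ f)) +
        Polynomial.C l.slope ^ 2 * restrict i l (pderiv 0 (pderiv 0 f)) := by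
    rw [derivative_restrict i l f, Polynomial.derivative_add, Polynomial.derivative_C_mul,
      derivative_restrict, derivative_restrict, pderiv_pderiv_comm i.succ 0]
    ring
  refine ⟨-2 * restrict i l (pderiv 0 f) * restrict i l (pderiv 0 (pderiv i.succ f)) +
    (restrict i l (pderiv i.succ f) - Polynomial.C l.slope * restrict i l (pderiv 0 f)) *
      restrict i l (pderiv 0 (pderiv 0 f)), ?_⟩
  rw [second_derivative, derivative_restrict]
  simp only [flexPoly, map_add, map_sub, map_mul, map_pow, map_ofNat]
  ring

lemma vanishesOn_flexPoly {i : Fin 2} {l : SliceLine K} {f : MvPolynomial (Fin 3) K}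
    (h : VanishesOn i f l) : VanishesOn i (flexPoly i.succ 0 f) l := by
  obtain ⟨v, hv⟩ := exists_restrict_flexPoly_eq i l f
  rw [VanishesOn] at h ⊢
  rw [hv, h, Polynomial.derivative_zero, Polynomial.derivative_zero, mul_zero, zero_mul, add_zero]

lemma eq_zero_of_double_root_of_dvd {φ a v : Polynomial K} {y : K}
    (hchar : ∀ k : ℕ, 0 < k → k ≤ φ.natDegree → (k : K) ≠ 0) (hφ : φ.IsRoot y)
    (hφ' : φ.derivative.IsRoot y) (ha : ¬ a.IsRoot y)
    (hdvd : φ ∣ a * φ.derivative.derivative + φ.derivative * v) : φ = 0 := by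
  by_contra hne
  set k := φ.rootMultiplicity y
  have hk_two : 1 < k := (Polynomial.one_lt_rootMultiplicity_iff_isRoot hne).2 ⟨hφ, hφ'⟩
  have hk_deg : k ≤ φ.natDegree := by
    simpa using Polynomial.natDegree_le_of_dvd (Polynomial.pow_rootMultiplicity_dvd φ y) hne
  have mult_first : φ.derivative.rootMultiplicity y = k - 1 :=
    Polynomial.derivative_rootMultiplicity_of_root_of_mem_nonZeroDivisors hφ
      (mem_nonZeroDivisors_of_ne_zero (hchar k (by omega) hk_deg))
  have mult_second : φ.derivative.derivative.rootMultiplicity y = k - 2 := by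
    rw [Polynomial.derivative_rootMultiplicity_of_root_of_mem_nonZeroDivisors hφ', mult_first,
      Nat.sub_sub]
    rw [mult_first]
    exact mem_nonZeroDivisors_of_ne_zero (hchar (k - 1) (by omega) (by omega))
  have first_ne : φ.derivative ≠ 0 := by
    intro hzero
    rw [hzero, Polynomial.rootMultiplicity_zero] at mult_first
    omega
  have second_ne : φ.derivative.derivative ≠ 0 := by
    intro hzero
    have hlt := (Polynomial.one_lt_rootMultiplicity_iff_isRoot first_ne).2
      ⟨hφ', by rw [hzero, Polynomial.IsRoot, Polynomial.eval_zero]⟩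
    rw [hzero, Polynomial.rootMultiplicity_zero] at mult_second
    omega
  have pow_dvd_mul : (Polynomial.X - Polynomial.C y) ^ (k - 1) ∣ a * φ.derivative.derivative := by
    have hφ_dvd := ((pow_dvd_pow _ (Nat.sub_le k 1)).trans
      (Polynomial.pow_rootMultiplicity_dvd φ y)).trans hdvd
    have hφ'_dvd := Polynomial.pow_rootMultiplicity_dvd φ.derivative y
    rw [mult_first] at hφ'_dvd
    exact (dvd_add_left (hφ'_dvd.mul_right v)).1 hφ_dvd
  have hcop : IsCoprime ((Polynomial.X - Polynomial.C y) ^ (k - 1)) a :=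
    (((Polynomial.irreducible_X_sub_C y).coprime_iff_not_dvd).2
      fun h => ha (Polynomial.dvd_iff_isRoot.1 h)).pow_left
  have hle : k - 1 ≤ φ.derivative.derivative.rootMultiplicity y :=
    (Polynomial.le_rootMultiplicity_iff second_ne).2 (hcop.dvd_of_dvd_mul_left pow_dvd_mul)
  omega

lemma vanishesOn_of_tangent_of_dvd_flexPoly {i : Fin 2} {f : MvPolynomial (Fin 3) K}
    (hflex : f ∣ flexPoly i.succ 0 f)
    (hchar : ∀ k : ℕ, 0 < k → k ≤ f.totalDegree → (k : K) ≠ 0) {l : SliceLine K} {u : K}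
    (hmem : eval (linePoint i l u) f = 0) (hvert : eval (linePoint i l u) (pderiv 0 f) ≠ 0)
    (htangent : eval (linePoint i l u) (pderiv i.succ f) +
      l.slope * eval (linePoint i l u) (pderiv 0 f) = 0) :
    VanishesOn i f l := by
  obtain ⟨v, hv⟩ := exists_restrict_flexPoly_eq i l f
  refine eq_zero_of_double_root_of_dvd (y := u) (a := restrict i l (pderiv 0 f) ^ 2) (v := v)
    (fun k hk hle => hchar k hk (hle.trans (natDegree_restrict_le i l f))) ?_ ?_ ?_ ?_
  · rwa [Polynomial.IsRoot, eval_restrict]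
  · rwa [derivative_restrict, Polynomial.IsRoot, Polynomial.eval_add, Polynomial.eval_C_mul,
      eval_restrict, eval_restrict]
  · rw [Polynomial.IsRoot, Polynomial.eval_pow, eval_restrict]
    exact pow_ne_zero 2 hvert
  · rw [← hv]
    exact map_dvd (restrict i l) hflex

end Flex

/-- The line belongs to the regulus with parameters `α, β, γ, δ`, that is, its slope and height
are the prescribed affine functions of its base. These are the lines of one family on a surface
`Z = α * W 0 * W 1 + …` that is affine in each coordinate. -/
def OnRegulus {K : Type*} [Add K] [Mul K] (α β γ δ : K) (l : SliceLine K) : Prop :=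
  l.slope = α * l.base + γ ∧ l.height = β * l.base + δ

section RuledSurface

variable {K : Type*} [Field K]

lemma eval_aeval_X {σ : Type*} (v : σ → K) (i : σ) (φ : Polynomial K) :
    eval v (Polynomial.aeval (X i) φ) = φ.eval (v i) := by
  simpa using (Polynomial.aeval_algHom_apply (aeval v) (X i) φ).symm

lemma degreeOf_aeval_X_of_ne {σ : Type*} {i j : σ} (h : j ≠ i) (φ : Polynomial K) :
    degreeOf j (Polynomial.aeval (X i : MvPolynomial σ K) φ) = 0 := by
  rw [Polynomial.aeval_eq_sum_range]
  refine Nat.le_zero.1 ((degreeOf_sum_le _ _ _).trans (Finset.sup_le fun n _ => ?_))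
  rw [smul_eq_C_mul]
  exact (degreeOf_C_mul_le _ _ _).trans (degreeOf_X_pow_of_ne n h).le

/-- The line of the other family with slope `m` through the point of `l` with free coordinate
`c`. -/
def crossLine (l : SliceLine K) (c m : K) : SliceLine K :=
  ⟨c, m, l.slope * c + l.height - m * l.base⟩

lemma linePoint_crossLine (i : Fin 2) (l : SliceLine K) (c m : K) :
    linePoint i.rev (crossLine l c m) l.base = linePoint i l c := by
  have hfree := linePoint_succ i.rev (crossLine l c m) l.base
  have hfixed := linePoint_rev_succ i.rev (crossLine l c m) l.base
  rw [Fin.rev_rev] at hfixed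
  refine funext (forall_fin_three_of_rev i ?_ ?_ ?_)
  · simp only [linePoint_zero, crossLine]
    ring
  · rw [hfixed, linePoint_succ, crossLine]
  · rw [hfree, linePoint_rev_succ]

/-- An equation of the surface swept out by the lines of the other family through the points of
`l`, the one at the point with free coordinate `c` having slope `φ c / ψ c`. -/
noncomputable def sweepPoly (i : Fin 2) (l : SliceLine K) (φ ψ : Polynomial K) :
    MvPolynomial (Fin 3) K :=
  Polynomial.aeval (X i.succ) ψ * (X 0 - C l.slope * X i.succ - C l.height) -
    Polynomial.aeval (X i.succ) φ * (X i.rev.succ - C l.base)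

lemma eval_sweepPoly (i : Fin 2) (l : SliceLine K) (φ ψ : Polynomial K) (v : Fin 3 → K) :
    eval v (sweepPoly i l φ ψ) = ψ.eval (v i.succ) * (v 0 - l.slope * v i.succ - l.height) -
      φ.eval (v i.succ) * (v i.rev.succ - l.base) := by
  simp [sweepPoly, eval_aeval_X]

lemma degreeOf_sweepPoly_le (i : Fin 2) (l : SliceLine K) (φ ψ : Polynomial K) {k : Fin 3}
    (hk : k ≠ i.succ) : degreeOf k (sweepPoly i l φ ψ) ≤ 1 := by
  have degreeOf_X_le (j : Fin 3) : degreeOf k (X j : MvPolynomial (Fin 3) K) ≤ 1 := by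
    rw [degreeOf_X]
    split_ifs <;> simp
  refine (degreeOf_sub_le _ _ _).trans (max_le ?_ ?_) <;>
    refine (degreeOf_mul_le _ _ _).trans ?_ <;>
    rw [degreeOf_aeval_X_of_ne hk, zero_add]
  · refine (degreeOf_sub_le _ _ _).trans (max_le ((degreeOf_sub_le _ _ _).trans ?_) ?_)
    · exact max_le (degreeOf_X_le 0) ((degreeOf_C_mul_le _ _ _).trans (degreeOf_X_le _))
    · simp
  · exact (degreeOf_sub_le _ _ _).trans (max_le (degreeOf_X_le _) (by simp))

lemma VanishesOn.crossLine_of_dvd_flexPoly {i : Fin 2} {f : MvPolynomial (Fin 3) K}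
    {l : SliceLine K} (hl : VanishesOn i f l) (hflex : f ∣ flexPoly i.rev.succ 0 f)
    (hchar : ∀ k : ℕ, 0 < k → k ≤ f.totalDegree → (k : K) ≠ 0) {c : K}
    (hc : (restrict i l (pderiv 0 f)).eval c ≠ 0) :
    VanishesOn i.rev f (crossLine l c
      ((-restrict i l (pderiv i.rev.succ f)).eval c / (restrict i l (pderiv 0 f)).eval c)) := by
  refine vanishesOn_of_tangent_of_dvd_flexPoly (u := l.base) hflex hchar ?_ ?_ ?_ <;>
    rw [linePoint_crossLine]
  · exact hl.eval_linePoint c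
  · rwa [← eval_restrict]
  · simp only [crossLine, ← eval_restrict]
    rw [div_mul_cancel₀ _ hc, Polynomial.eval_neg, add_neg_cancel]

variable [Infinite K]

lemma exists_finset_card_eq_and_eval_ne_zero {φ : Polynomial K} (hφ : φ ≠ 0) (n : ℕ) :
    ∃ T : Finset K, T.card = n ∧ ∀ c ∈ T, φ.eval c ≠ 0 := by
  classical
  obtain ⟨T, hT, hcard⟩ :=
    (φ.roots.toFinset.finite_toSet.infinite_compl).exists_subset_card_eq n
  exact ⟨T, hcard, fun c hc => by simpa [hφ] using hT hc⟩

lemma sweepPoly_ne_zero (i : Fin 2) (l : SliceLine K) (φ : Polynomial K) {ψ : Polynomial K}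
    (hψ : ψ ≠ 0) : sweepPoly i l φ ψ ≠ 0 := by
  intro hzero
  obtain ⟨T, hcard, hT⟩ := exists_finset_card_eq_and_eval_ne_zero hψ 1
  obtain ⟨c, rfl⟩ := Finset.card_eq_one.1 hcard
  have heval := eval_sweepPoly i l φ ψ (linePoint i {l with height := l.height + 1} c)
  rw [hzero, map_zero, linePoint_zero, linePoint_succ, linePoint_rev_succ] at heval
  exact hT c (Finset.mem_singleton_self c) (by linear_combination -heval)

lemma vanishesOn_sweepPoly_crossLine (i : Fin 2) (l : SliceLine K) (φ : Polynomial K)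
    {ψ : Polynomial K} {c : K} (hc : ψ.eval c ≠ 0) :
    VanishesOn i.rev (sweepPoly i l φ ψ) (crossLine l c (φ.eval c / ψ.eval c)) := by
  refine Polynomial.funext fun u => ?_
  have hfixed := linePoint_rev_succ i.rev (crossLine l c (φ.eval c / ψ.eval c)) u
  rw [Fin.rev_rev] at hfixed
  rw [eval_restrict, eval_sweepPoly, linePoint_succ, hfixed, linePoint_zero, Polynomial.eval_zero]
  simp only [crossLine]
  field_simp
  ring

lemma degreeOf_le_one_of_vanishesOn_of_dvd_flexPoly {i : Fin 2} {f : MvPolynomial (Fin 3) K}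
    (hf : Irreducible f) (hflex : f ∣ flexPoly i.rev.succ 0 f)
    (hchar : ∀ k : ℕ, 0 < k → k ≤ f.totalDegree → (k : K) ≠ 0) {l : SliceLine K}
    (hl : VanishesOn i f l) (hvert : ¬ VanishesOn i (pderiv 0 f) l) {k : Fin 3}
    (hk : k ≠ i.succ) : degreeOf k f ≤ 1 := by
  classical
  set ψ := restrict i l (pderiv 0 f)
  set φ := -restrict i l (pderiv i.rev.succ f)
  set g := sweepPoly i l φ ψ with hg
  suffices hdvd : f ∣ g from by
    obtain ⟨h, hgh⟩ := hdvd
    have hg0 : g ≠ 0 := sweepPoly_ne_zero i l φ hvert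
    have hdeg := degreeOf_sweepPoly_le i l φ ψ hk
    rw [← hg, hgh, degreeOf_mul_eq hf.ne_zero (right_ne_zero_of_mul (hgh ▸ hg0))] at hdeg
    exact le_of_add_le_left hdeg
  by_contra hfg
  obtain ⟨T, hcard, hT⟩ :=
    exists_finset_card_eq_and_eval_ne_zero hvert ((f.totalDegree + g.totalDegree) ^ 2 + 1)
  let tangent (c : K) : SliceLine K := crossLine l c (φ.eval c / ψ.eval c)
  have on_f : ∀ m ∈ T.image tangent, VanishesOn i.rev f m :=
    Finset.forall_mem_image.2 fun c hc => hl.crossLine_of_dvd_flexPoly hflex hchar (hT c hc)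
  have on_g : ∀ m ∈ T.image tangent, VanishesOn i.rev g m :=
    Finset.forall_mem_image.2 fun c hc => vanishesOn_sweepPoly_crossLine i l φ (hT c hc)
  have injOn_base : Set.InjOn SliceLine.base (T.image tangent : Set (SliceLine K)) := by
    rw [Finset.coe_image]
    rintro _ ⟨c, -, rfl⟩ _ ⟨d, -, rfl⟩ (rfl : c = d)
    rfl
  have hle := card_le_of_vanishesOn_of_not_dvd hf hfg injOn_base on_f on_g
  rw [Finset.card_image_of_injective _ fun c d h => congrArg SliceLine.base h, hcard] at hle
  omega

end RuledSurface

section Classification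

lemma eq_zero_of_dvd_of_totalDegree_lt {σ R : Type*} [CommRing R] [IsDomain R]
    {f g : MvPolynomial σ R} (h : f ∣ g) (hdeg : g.totalDegree < f.totalDegree) : g = 0 := by
  by_contra hne
  exact hdeg.not_ge (totalDegree_le_of_dvd_of_isDomain h hne)

lemma eval_update_of_degreeOf_le_one {σ R : Type*} [Finite σ] [DecidableEq σ] [CommRing R] {k : σ}
    {f : MvPolynomial σ R} (h : degreeOf k f ≤ 1) (v : σ → R) (z : R) :
    eval (Function.update v k z) f =
      eval v (pderiv k f) * z + eval (Function.update v k 0) f := by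
  have hlin := Polynomial.eq_X_add_C_of_natDegree_le_one ((natDegree_alongCoord_le v k f).trans h)
  have hslope : eval v (pderiv k f) = (alongCoord v k f).coeff 1 := by
    conv_lhs => rw [← Function.update_eq_self k v, ← eval_alongCoord, ← derivative_alongCoord, hlin]
    simp
  rw [← eval_alongCoord, ← eval_alongCoord, hslope, hlin]
  simp

variable {K : Type*} [Field K]

lemma totalDegree_pderiv_lt {σ : Type*} {f : MvPolynomial σ K} (hf : Irreducible f) (i : σ) :
    (pderiv i f).totalDegree < f.totalDegree :=
  (totalDegree_pderiv_le i f).trans_lt (Nat.sub_one_lt (totalDegree_pos_of_irreducible hf).ne')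

lemma pderiv_pderiv_eq_zero_of_dvd_flexPoly {σ : Type*} {f : MvPolynomial σ K}
    (hf : Irreducible f) (hchar : ∀ k : ℕ, 0 < k → k ≤ f.totalDegree → (k : K) ≠ 0) {i j : σ}
    (hi : degreeOf i f ≤ 1) (hj : degreeOf j f ≤ 1) (hj0 : pderiv j f ≠ 0)
    (hflex : f ∣ flexPoly i j f) : pderiv j (pderiv i f) = 0 := by
  have hlt := totalDegree_pderiv_lt hf
  have hmixed : (pderiv j (pderiv i f)).totalDegree < f.totalDegree :=
    (totalDegree_pderiv_le j _).trans_lt ((Nat.sub_le _ _).trans_lt (hlt i))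
  rcases Nat.lt_or_ge f.totalDegree 2 with hdeg | hdeg
  · have hi_deg : (pderiv i f).totalDegree = 0 := by have := hlt i; omega
    rw [totalDegree_eq_zero_iff_eq_C.1 hi_deg, pderiv_C]
  have hdvd : f ∣ C (-2) * (pderiv i f * pderiv j f * pderiv j (pderiv i f)) := by
    rw [flexPoly, pderiv_pderiv_self_eq_zero hi, pderiv_pderiv_self_eq_zero hj] at hflex
    convert hflex using 1
    rw [C_neg, map_ofNat C 2]
    ring
  have htwo : IsUnit (C (-2) : MvPolynomial σ K) := by
    have := hchar 2 two_pos hdeg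
    exact (isUnit_iff_ne_zero.2 (by simpa using this)).map C
  rw [htwo.dvd_mul_left] at hdvd
  rcases hf.prime.dvd_or_dvd hdvd with hdvd | hdvd
  · rcases hf.prime.dvd_or_dvd hdvd with hdvd | hdvd
    · rw [eq_zero_of_dvd_of_totalDegree_lt hdvd (hlt i), map_zero]
    · exact absurd (eq_zero_of_dvd_of_totalDegree_lt hdvd (hlt j)) hj0
  · exact eq_zero_of_dvd_of_totalDegree_lt hdvd hmixed

lemma exists_onRegulus_of_degreeOf_le_one {f : MvPolynomial (Fin 3) K}
    (hdeg : ∀ k, degreeOf k f ≤ 1) {e : K} (he : e ≠ 0) (hvert : pderiv 0 f = C e) (i : Fin 2) :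
    ∃ α β γ δ, ∀ l, VanishesOn i f l → OnRegulus α β γ δ l := by
  let floorPoint (x u : K) : Fin 3 → K := linePoint i ⟨x, 0, 0⟩ u
  have floor_affine (u : K) : ∃ a b, ∀ x, eval (floorPoint x u) f = a * x + b := by
    refine ⟨eval (floorPoint 0 u) (pderiv i.rev.succ f),
      eval (Function.update (floorPoint 0 u) i.rev.succ 0) f, fun x => ?_⟩
    rw [← eval_update_of_degreeOf_le_one (hdeg i.rev.succ) (floorPoint 0 u) x]
    congr 2
    refine funext (forall_fin_three_of_rev i ?_ ?_ ?_)
    · rw [Function.update_of_ne (Fin.succ_ne_zero _).symm]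
      simp only [floorPoint, linePoint_zero]
    · rw [Function.update_of_ne ((Fin.succ_injective _).ne (rev_ne_self i).symm)]
      simp only [floorPoint, linePoint_succ]
    · rw [Function.update_self]
      exact linePoint_rev_succ i _ u
  have on_line (l : SliceLine K) (hl : VanishesOn i f l) (u : K) :
      e * (l.slope * u + l.height) + eval (floorPoint l.base u) f = 0 := by
    rw [← hl.eval_linePoint u]
    have hup : linePoint i l u =
        Function.update (floorPoint l.base u) 0 (l.slope * u + l.height) := by
      simp only [floorPoint, linePoint, Fin.update_cons_zero]
    have hdown : Function.update (floorPoint l.base u) 0 0 = floorPoint l.base u := by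
      simp only [floorPoint, linePoint, Fin.update_cons_zero, zero_mul, add_zero]
    rw [hup, eval_update_of_degreeOf_le_one (hdeg 0), hvert, eval_C, hdown]
  obtain ⟨a₀, b₀, h₀⟩ := floor_affine 0
  obtain ⟨a₁, b₁, h₁⟩ := floor_affine 1
  refine ⟨-(a₁ - a₀) / e, -a₀ / e, -(b₁ - b₀) / e, -b₀ / e, fun l hl => ?_⟩
  have at₀ := on_line l hl 0
  have at₁ := on_line l hl 1
  rw [h₀] at at₀
  rw [h₁] at at₁
  constructor <;> field_simp
  · linear_combination at₁ - at₀
  · linear_combination at₀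

/-- The surface `f = 0` contains more than `16 (deg f)²` lines of the `i`-th family with pairwise
distinct bases. This forces every polynomial of degree at most `3 deg f` that vanishes on all lines
of the `i`-th family on the surface to be a multiple of `f`. -/
def IsRuled (i : Fin 2) (f : MvPolynomial (Fin 3) K) : Prop :=
  ∃ S : Finset (SliceLine K), Set.InjOn SliceLine.base (S : Set (SliceLine K)) ∧
    (∀ l ∈ S, VanishesOn i f l) ∧ 16 * f.totalDegree ^ 2 < S.card

variable [Infinite K] {f : MvPolynomial (Fin 3) K}

lemma IsRuled.dvd {i : Fin 2} (h : IsRuled i f) (hf : Irreducible f) {g : MvPolynomial (Fin 3) K}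
    (hdeg : g.totalDegree ≤ 3 * f.totalDegree)
    (hg : ∀ l, VanishesOn i f l → VanishesOn i g l) : f ∣ g := by
  obtain ⟨S, hinj, hS, hcard⟩ := h
  by_contra hfg
  have hle := card_le_of_vanishesOn_of_not_dvd hf hfg hinj hS fun l hl => hg l (hS l hl)
  have hsq : (f.totalDegree + g.totalDegree) ^ 2 ≤ (4 * f.totalDegree) ^ 2 :=
    Nat.pow_le_pow_left (by omega) 2
  rw [mul_pow] at hsq
  omega

lemma IsRuled.eq_zero {i : Fin 2} (h : IsRuled i f) (hf : Irreducible f)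
    {g : MvPolynomial (Fin 3) K} (hdeg : g.totalDegree < f.totalDegree)
    (hg : ∀ l, VanishesOn i f l → VanishesOn i g l) : g = 0 :=
  eq_zero_of_dvd_of_totalDegree_lt (h.dvd hf (by omega) hg) hdeg

lemma pderiv_zero_ne_zero_of_isRuled (hf : Irreducible f)
    (hchar : ∀ k : ℕ, 0 < k → k ≤ f.totalDegree → (k : K) ≠ 0) (h : ∀ i, IsRuled i f) :
    pderiv 0 f ≠ 0 := by
  intro hzero
  have horizontal (i : Fin 2) : pderiv i.succ f = 0 := by
    refine (h i).eq_zero hf (totalDegree_pderiv_lt hf _) fun l hl => ?_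
    have hderiv := derivative_restrict i l f
    rw [VanishesOn] at hl ⊢
    rw [hl, hzero, Polynomial.derivative_zero, map_zero, mul_zero, add_zero] at hderiv
    exact hderiv.symm
  have hconst := eq_C_of_forall_pderiv_eq_zero hchar (Fin.cases hzero horizontal)
  have hpos := totalDegree_pos_of_irreducible hf
  rw [hconst, totalDegree_C] at hpos
  exact hpos.false

lemma degreeOf_le_one_of_isRuled (hf : Irreducible f)
    (hchar : ∀ k : ℕ, 0 < k → k ≤ f.totalDegree → (k : K) ≠ 0) (h : ∀ i, IsRuled i f)
    (k : Fin 3) : degreeOf k f ≤ 1 := by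
  have bound (i : Fin 2) {k : Fin 3} (hk : k ≠ i.succ) : degreeOf k f ≤ 1 := by
    obtain ⟨l, hl, hvert⟩ : ∃ l, VanishesOn i f l ∧ ¬ VanishesOn i (pderiv 0 f) l := by
      by_contra! hall
      exact pderiv_zero_ne_zero_of_isRuled hf hchar h
        ((h i).eq_zero hf (totalDegree_pderiv_lt hf 0) hall)
    have hflex : f ∣ flexPoly i.rev.succ 0 f :=
      (h i.rev).dvd hf (totalDegree_flexPoly_le _ _ _) fun _ => vanishesOn_flexPoly
    exact degreeOf_le_one_of_vanishesOn_of_dvd_flexPoly hf hflex hchar hl hvert hk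
  rcases eq_or_ne k (Fin.succ 0) with rfl | hk
  exacts [bound 1 (by decide), bound 0 hk]

theorem exists_onRegulus_of_isRuled (hf : Irreducible f)
    (hchar : ∀ k : ℕ, 0 < k → k ≤ f.totalDegree → (k : K) ≠ 0) (h : ∀ i, IsRuled i f)
    (i : Fin 2) : ∃ α β γ δ, ∀ l, VanishesOn i f l → OnRegulus α β γ δ l := by
  have hdeg := degreeOf_le_one_of_isRuled hf hchar h
  have hvert := pderiv_zero_ne_zero_of_isRuled hf hchar h
  have horizontal (i : Fin 2) : pderiv i.succ (pderiv 0 f) = 0 := by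
    rw [pderiv_pderiv_comm]
    exact pderiv_pderiv_eq_zero_of_dvd_flexPoly hf hchar (hdeg _) (hdeg 0) hvert
      ((h i).dvd hf (totalDegree_flexPoly_le _ _ _) fun _ => vanishesOn_flexPoly)
  have hconst : pderiv 0 f = C (coeff 0 (pderiv 0 f)) :=
    eq_C_of_forall_pderiv_eq_zero
      (fun k hk hle => hchar k hk (hle.trans (totalDegree_pderiv_lt hf 0).le))
      (Fin.cases (pderiv_pderiv_self_eq_zero (hdeg 0)) horizontal)
  refine exists_onRegulus_of_degreeOf_le_one hdeg (fun hcoeff => hvert ?_) hconst i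
  rw [hconst, hcoeff, C_0]

end Classification

/-! ### Incidences between the two families -/

section Incidences

variable {K : Type*} [Field K]

/-- A line `l` of one family and a line `m` of the other family have a common point, namely the
one whose horizontal coordinates are the two bases. -/
def Meets (l m : SliceLine K) : Prop :=
  l.slope * m.base + l.height = m.slope * l.base + m.height

open Classical in
/-- The number of intersecting pairs formed by a line of `L₁` from one family and a line of `L₂`
from the other. -/
noncomputable def incidences (L₁ L₂ : Finset (SliceLine K)) : ℕ :=
  ∑ l ∈ L₁, (L₂.bipartiteAbove Meets l).card

/-- The lines in `L` have distinct bases and at most `M` of them belong to a common regulus. -/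
structure WellSpread (M : ℝ) (L : Finset (SliceLine K)) : Prop where
  injOn_base : Set.InjOn SliceLine.base (L : Set (SliceLine K))
  card_le : ∀ α β γ δ : K, ∀ S ⊆ L, (∀ l ∈ S, OnRegulus α β γ δ l) → (S.card : ℝ) ≤ M

variable {L L₁ L₂ : Finset (SliceLine K)} {M : ℝ}

lemma WellSpread.mono (h : WellSpread M L₂) (hsub : L₁ ⊆ L₂) : WellSpread M L₁ :=
  ⟨h.injOn_base.mono hsub, fun α β γ δ S hS => h.card_le α β γ δ S (hS.trans hsub)⟩

lemma WellSpread.nonneg (h : WellSpread M L) : 0 ≤ M := by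
  simpa using h.card_le 0 0 0 0 ∅ (Finset.empty_subset L)

lemma Meets.symm {l m : SliceLine K} (h : Meets l m) : Meets m l :=
  Eq.symm h

lemma Meets.linePoint_eq {l m : SliceLine K} (h : Meets l m) (i : Fin 2) :
    linePoint i l m.base = linePoint i.rev m l.base := by
  have hm : m = crossLine l m.base m.slope :=
    SliceLine.ext rfl rfl (eq_sub_of_add_eq' h.symm)
  conv_rhs => rw [hm, linePoint_crossLine]

lemma incidences_comm (L₁ L₂ : Finset (SliceLine K)) : incidences L₁ L₂ = incidences L₂ L₁ := by
  classical
  have hswap : Function.swap (Meets (K := K)) = Meets := by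
    ext l m
    exact ⟨Meets.symm, Meets.symm⟩
  rw [incidences, Finset.sum_card_bipartiteAbove_eq_sum_card_bipartiteBelow]
  simp only [← Finset.bipartiteAbove_swap, hswap, incidences]

lemma incidences_le_card_mul_card (L₁ L₂ : Finset (SliceLine K)) :
    incidences L₁ L₂ ≤ L₁.card * L₂.card := by
  classical
  exact Finset.sum_le_card_nsmul _ _ _ fun l _ => Finset.card_filter_le _ _

lemma incidences_mono_left (h : L₁ ⊆ L₂) (L : Finset (SliceLine K)) :
    incidences L₁ L ≤ incidences L₂ L :=
  Finset.sum_le_sum_of_subset h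

lemma incidences_mono_right (L : Finset (SliceLine K)) (h : L₁ ⊆ L₂) :
    incidences L L₁ ≤ incidences L L₂ := by
  simpa only [incidences_comm L] using incidences_mono_left h L

lemma incidences_filter_add_filter_not_left (L₁ L₂ : Finset (SliceLine K)) (P : SliceLine K → Prop)
    [DecidablePred P] :
    incidences {l ∈ L₁ | P l} L₂ + incidences {l ∈ L₁ | ¬ P l} L₂ = incidences L₁ L₂ :=
  Finset.sum_filter_add_sum_filter_not L₁ P _

lemma incidences_filter_add_filter_not_right (L₁ L₂ : Finset (SliceLine K)) (P : SliceLine K → Prop)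
    [DecidablePred P] :
    incidences L₁ {m ∈ L₂ | P m} + incidences L₁ {m ∈ L₂ | ¬ P m} = incidences L₁ L₂ := by
  simpa only [incidences_comm L₁] using incidences_filter_add_filter_not_left L₂ L₁ P

lemma incidences_add_le_union_left [DecidableEq K] {P Q : Finset (SliceLine K)} (hPQ : Disjoint P Q)
    (h₁ : L₁ ⊆ L) (h₂ : L₂ ⊆ L) :
    incidences P L₁ + incidences Q L₂ ≤ incidences (P ∪ Q) L := by
  rw [incidences, incidences, incidences, Finset.sum_union hPQ]
  exact add_le_add (incidences_mono_right P h₁) (incidences_mono_right Q h₂)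

lemma incidences_add_le_union_right [DecidableEq K] {P Q : Finset (SliceLine K)}
    (h₁ : L₁ ⊆ L) (h₂ : L₂ ⊆ L) (hPQ : Disjoint P Q) :
    incidences L₁ P + incidences L₂ Q ≤ incidences L (P ∪ Q) := by
  simpa only [incidences_comm _ (P ∪ Q), incidences_comm _ P, incidences_comm _ Q] using
    incidences_add_le_union_left hPQ h₁ h₂

variable {i : Fin 2} {f : MvPolynomial (Fin 3) K}

lemma vanishesOn_of_totalDegree_lt_card_meets {l : SliceLine K} {S : Finset (SliceLine K)}
    (hinj : Set.InjOn SliceLine.base (S : Set (SliceLine K)))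
    (hS : ∀ m ∈ S, VanishesOn i.rev f m) (hmeet : ∀ m ∈ S, Meets l m)
    (hcard : f.totalDegree < S.card) : VanishesOn i f l := by
  classical
  refine vanishesOn_of_totalDegree_lt_card (S.image SliceLine.base) ?_
    (by rwa [Finset.card_image_of_injOn hinj])
  refine Finset.forall_mem_image.2 fun m hm => ?_
  rw [(hmeet m hm).linePoint_eq, (hS m hm).eval_linePoint]

lemma incidences_le_of_not_vanishesOn
    (hinj : Set.InjOn SliceLine.base (L₂ : Set (SliceLine K)))
    (h₁ : ∀ l ∈ L₁, ¬ VanishesOn i f l) (h₂ : ∀ m ∈ L₂, VanishesOn i.rev f m) :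
    incidences L₁ L₂ ≤ L₁.card * f.totalDegree := by
  classical
  refine Finset.sum_le_card_nsmul _ _ _ fun l hl => not_lt.1 fun hlt => h₁ l hl ?_
  have hsub := Finset.filter_subset (Meets l) L₂
  exact vanishesOn_of_totalDegree_lt_card_meets (hinj.mono hsub) (fun m hm => h₂ m (hsub hm))
    (fun m hm => (Finset.mem_filter.1 hm).2) hlt

open Classical in
lemma incidences_le_filter_vanishesOn
    (hinj : Set.InjOn SliceLine.base (L₂ : Set (SliceLine K))) :
    incidences L₁ L₂ ≤ incidences {l ∈ L₁ | VanishesOn i f l} {m ∈ L₂ | VanishesOn i.rev f m} +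
      ({l ∈ L₁ | ¬ VanishesOn i f l}.card * f.totalDegree +
        incidences L₁ {m ∈ L₂ | ¬ VanishesOn i.rev f m}) := by
  rw [← incidences_filter_add_filter_not_right L₁ L₂ (VanishesOn i.rev f),
    ← incidences_filter_add_filter_not_left L₁ _ (VanishesOn i f), add_assoc]
  gcongr
  exact incidences_le_of_not_vanishesOn (hinj.mono (Finset.filter_subset _ _))
    (fun l hl => (Finset.mem_filter.1 hl).2) (fun m hm => (Finset.mem_filter.1 hm).2)

open Classical in
lemma incidences_le_filter_add_filter_not
    (hinj₁ : Set.InjOn SliceLine.base (L₁ : Set (SliceLine K)))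
    (hinj₂ : Set.InjOn SliceLine.base (L₂ : Set (SliceLine K))) :
    incidences L₁ L₂ ≤ incidences {l ∈ L₁ | VanishesOn i f l} {m ∈ L₂ | VanishesOn i.rev f m} +
      incidences {l ∈ L₁ | ¬ VanishesOn i f l} {m ∈ L₂ | ¬ VanishesOn i.rev f m} +
      f.totalDegree * ({l ∈ L₁ | ¬ VanishesOn i f l}.card +
        {m ∈ L₂ | ¬ VanishesOn i.rev f m}.card) := by
  have hsplit := incidences_le_filter_vanishesOn (i := i) (f := f) (L₁ := L₁) hinj₂
  rw [← incidences_filter_add_filter_not_left L₁ {m ∈ L₂ | ¬ VanishesOn i.rev f m}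
    (VanishesOn i f), incidences_comm {l ∈ L₁ | VanishesOn i f l} {m ∈ L₂ | ¬ _}] at hsplit
  have hcross : incidences {m ∈ L₂ | ¬ VanishesOn i.rev f m} {l ∈ L₁ | VanishesOn i f l} ≤
      {m ∈ L₂ | ¬ VanishesOn i.rev f m}.card * f.totalDegree :=
    incidences_le_of_not_vanishesOn (hinj₁.mono (Finset.filter_subset _ _))
      (fun m hm => (Finset.mem_filter.1 hm).2)
      (fun l hl => by rw [Fin.rev_rev]; exact (Finset.mem_filter.1 hl).2)
  linarith

lemma VanishesOn.of_mul {g : MvPolynomial (Fin 3) K} {l : SliceLine K}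
    (h : VanishesOn i (f * g) l) (hf : ¬ VanishesOn i f l) : VanishesOn i g l := by
  rw [VanishesOn, map_mul] at h
  exact (mul_eq_zero.1 h).resolve_left hf

end Incidences

section SurfaceIncidences

variable {K : Type*} [Field K] {M : ℝ}

/-- Up to the incidences that involve one of at most `16 d²` exceptional lines in either family,
`L₁` and `L₂` have as few incidences as two families of lines on a surface of degree `d` without
components that are reguli. -/
def HasSmallCore (d : ℕ) (M : ℝ) (L₁ L₂ : Finset (SliceLine K)) : Prop :=
  ∃ S₁ ⊆ L₁, ∃ S₂ ⊆ L₂, S₁.card ≤ 16 * d ^ 2 ∧ S₂.card ≤ 16 * d ^ 2 ∧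
    (incidences L₁ L₂ : ℝ) ≤ incidences S₁ L₂ + incidences L₁ S₂ + d * (L₁.card + L₂.card) +
      M * (√L₁.card * √L₂.card)

lemma sqrt_mul_sqrt_add_le {a b c d : ℝ} (ha : 0 ≤ a) (hb : 0 ≤ b) (hc : 0 ≤ c) (hd : 0 ≤ d) :
    √a * √b + √c * √d ≤ √(a + c) * √(b + d) := by
  have := Real.sum_sqrt_mul_sqrt_le Finset.univ (f := ![a, c]) (g := ![b, d])
    (Fin.forall_fin_two.2 ⟨ha, hc⟩) (Fin.forall_fin_two.2 ⟨hb, hd⟩)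
  simpa using this

lemma HasSmallCore.union [DecidableEq K] {d e : ℕ} {T₁ T₂ R₁ R₂ : Finset (SliceLine K)}
    (hT : HasSmallCore d M T₁ T₂) (hR : HasSmallCore e M R₁ R₂) (hM : 0 ≤ M)
    (hdisj₁ : Disjoint T₁ R₁) (hdisj₂ : Disjoint T₂ R₂)
    (hcross : incidences (T₁ ∪ R₁) (T₂ ∪ R₂) ≤
      incidences T₁ T₂ + incidences R₁ R₂ + d * (R₁.card + R₂.card)) :
    HasSmallCore (d + e) M (T₁ ∪ R₁) (T₂ ∪ R₂) := by
  obtain ⟨P₁, hP₁, P₂, hP₂, cardP₁, cardP₂, hT⟩ := hT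
  obtain ⟨Q₁, hQ₁, Q₂, hQ₂, cardQ₁, cardQ₂, hR⟩ := hR
  have card_union {P Q : Finset (SliceLine K)} (hP : P.card ≤ 16 * d ^ 2)
      (hQ : Q.card ≤ 16 * e ^ 2) : (P ∪ Q).card ≤ 16 * (d + e) ^ 2 := by
    have := Finset.card_union_le P Q
    nlinarith [Nat.zero_le (d * e)]
  have core₁ := incidences_add_le_union_left (hdisj₁.mono hP₁ hQ₁)
    (Finset.subset_union_left (s₁ := T₂) (s₂ := R₂)) Finset.subset_union_right
  have core₂ := incidences_add_le_union_right
    (Finset.subset_union_left (s₁ := T₁) (s₂ := R₁)) Finset.subset_union_right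
    (hdisj₂.mono hP₂ hQ₂)
  have hsqrt := mul_le_mul_of_nonneg_left (sqrt_mul_sqrt_add_le (Nat.cast_nonneg T₁.card)
    (Nat.cast_nonneg T₂.card) (Nat.cast_nonneg R₁.card) (Nat.cast_nonneg R₂.card)) hM
  refine ⟨P₁ ∪ Q₁, Finset.union_subset_union hP₁ hQ₁, P₂ ∪ Q₂,
    Finset.union_subset_union hP₂ hQ₂, card_union cardP₁ cardQ₁, card_union cardP₂ cardQ₂, ?_⟩
  rw [Finset.card_union_of_disjoint hdisj₁, Finset.card_union_of_disjoint hdisj₂]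
  have hcross' : (incidences (T₁ ∪ R₁) (T₂ ∪ R₂) : ℝ) ≤
      incidences T₁ T₂ + incidences R₁ R₂ + d * (R₁.card + R₂.card) := by exact_mod_cast hcross
  have core₁' : (incidences P₁ T₂ + incidences Q₁ R₂ : ℝ) ≤
      incidences (P₁ ∪ Q₁) (T₂ ∪ R₂) := by exact_mod_cast core₁
  have core₂' : (incidences T₁ P₂ + incidences R₁ Q₂ : ℝ) ≤
      incidences (T₁ ∪ R₁) (P₂ ∪ Q₂) := by exact_mod_cast core₂
  have hslack : (0 : ℝ) ≤ e * (T₁.card + T₂.card) := by positivity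
  push_cast
  linarith

variable [Infinite K] {f : MvPolynomial (Fin 3) K} {L₁ L₂ : Finset (SliceLine K)}

lemma hasSmallCore_of_irreducible (hf : Irreducible f)
    (hchar : ∀ k : ℕ, 0 < k → k ≤ f.totalDegree → (k : K) ≠ 0)
    (hL₁ : WellSpread M L₁) (hL₂ : WellSpread M L₂)
    (h₁ : ∀ l ∈ L₁, VanishesOn 0 f l) (h₂ : ∀ m ∈ L₂, VanishesOn 1 f m) :
    HasSmallCore f.totalDegree M L₁ L₂ := by
  have hM : 0 ≤ f.totalDegree * (L₁.card + L₂.card) + M * (√L₁.card * √L₂.card) :=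
    add_nonneg (by positivity) (mul_nonneg hL₁.nonneg (by positivity))
  by_cases small₁ : L₁.card ≤ 16 * f.totalDegree ^ 2
  · refine ⟨L₁, subset_rfl, ∅, Finset.empty_subset _, small₁, by simp, ?_⟩
    linarith [Nat.cast_nonneg (α := ℝ) (incidences L₁ ∅)]
  by_cases small₂ : L₂.card ≤ 16 * f.totalDegree ^ 2
  · refine ⟨∅, Finset.empty_subset _, L₂, subset_rfl, by simp, small₂, ?_⟩
    linarith [Nat.cast_nonneg (α := ℝ) (incidences ∅ L₂)]
  have hruled : ∀ i, IsRuled i f := Fin.forall_fin_two.2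
    ⟨⟨L₁, hL₁.injOn_base, h₁, not_le.1 small₁⟩, ⟨L₂, hL₂.injOn_base, h₂, not_le.1 small₂⟩⟩
  obtain ⟨α, β, γ, δ, hreg₁⟩ := exists_onRegulus_of_isRuled hf hchar hruled 0
  obtain ⟨α', β', γ', δ', hreg₂⟩ := exists_onRegulus_of_isRuled hf hchar hruled 1
  have card₁ := hL₁.card_le α β γ δ L₁ subset_rfl fun l hl => hreg₁ l (h₁ l hl)
  have card₂ := hL₂.card_le α' β' γ' δ' L₂ subset_rfl fun m hm => hreg₂ m (h₂ m hm)
  refine ⟨∅, Finset.empty_subset _, ∅, Finset.empty_subset _, by simp, by simp, ?_⟩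
  calc (incidences L₁ L₂ : ℝ) ≤ L₁.card * L₂.card := by
        exact_mod_cast incidences_le_card_mul_card L₁ L₂
    _ = (√L₁.card * √L₂.card) * (√L₁.card * √L₂.card) := by
        rw [mul_mul_mul_comm, Real.mul_self_sqrt (Nat.cast_nonneg _),
          Real.mul_self_sqrt (Nat.cast_nonneg _)]
    _ ≤ (√M * √M) * (√L₁.card * √L₂.card) := by gcongr
    _ = M * (√L₁.card * √L₂.card) := by rw [Real.mul_self_sqrt hL₁.nonneg]
    _ ≤ _ := le_add_of_nonneg_left (by positivity)

theorem hasSmallCore_of_vanishesOn (hf : f ≠ 0)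
    (hchar : ∀ k : ℕ, 0 < k → k ≤ f.totalDegree → (k : K) ≠ 0)
    (hL₁ : WellSpread M L₁) (hL₂ : WellSpread M L₂)
    (h₁ : ∀ l ∈ L₁, VanishesOn 0 f l) (h₂ : ∀ m ∈ L₂, VanishesOn 1 f m) :
    HasSmallCore f.totalDegree M L₁ L₂ := by
  classical
  induction f using UniqueFactorizationMonoid.induction_on_prime generalizing L₁ L₂ with
  | h₁ => exact absurd rfl hf
  | h₂ u hu =>
    obtain rfl : L₁ = ∅ := Finset.eq_empty_of_forall_notMem fun l hl =>
      (hu.map (eval (linePoint 0 l 0))).ne_zero ((h₁ l hl).eval_linePoint 0)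
    refine ⟨∅, subset_rfl, ∅, Finset.empty_subset _, by simp, by simp, ?_⟩
    simp only [incidences, Finset.sum_empty, Finset.card_empty, Nat.cast_zero, Real.sqrt_zero,
      zero_mul, mul_zero, zero_add, add_zero]
    positivity
  | h₃ g q hg hq ih =>
    have hdeg := totalDegree_mul_of_isDomain hq.ne_zero hg
    have on_q : HasSmallCore q.totalDegree M {l ∈ L₁ | VanishesOn 0 q l}
        {m ∈ L₂ | VanishesOn 1 q m} :=
      hasSmallCore_of_irreducible hq.irreducible (fun k hk hle => hchar k hk (by omega))
        (hL₁.mono (Finset.filter_subset _ _)) (hL₂.mono (Finset.filter_subset _ _))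
        (fun l hl => (Finset.mem_filter.1 hl).2) (fun m hm => (Finset.mem_filter.1 hm).2)
    have on_g : HasSmallCore g.totalDegree M {l ∈ L₁ | ¬ VanishesOn 0 q l}
        {m ∈ L₂ | ¬ VanishesOn 1 q m} := by
      refine ih hg (fun k hk hle => hchar k hk (by omega))
        (hL₁.mono (Finset.filter_subset _ _)) (hL₂.mono (Finset.filter_subset _ _))
        (fun l hl => ?_) (fun m hm => ?_)
      · exact (h₁ l (Finset.mem_filter.1 hl).1).of_mul (Finset.mem_filter.1 hl).2
      · exact (h₂ m (Finset.mem_filter.1 hm).1).of_mul (Finset.mem_filter.1 hm).2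
    have hunion := on_q.union on_g hL₁.nonneg (Finset.disjoint_filter_filter_not _ _ _)
      (Finset.disjoint_filter_filter_not _ _ _)
    rw [Finset.filter_union_filter_not_eq, Finset.filter_union_filter_not_eq, ← hdeg] at hunion
    exact hunion (incidences_le_filter_add_filter_not (i := 0) hL₁.injOn_base hL₂.injOn_base)

end SurfaceIncidences

section Sampling

variable {α β : Type*} [DecidableEq α] {L D : Finset α} {k : ℝ} {l l' : α}

/-- The centred and rescaled indicator of `l ∈ S`, for a random set `S` containing each element
with probability `1 / (k + 1)`: it has mean zero and variance `k`. -/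
noncomputable def centredIndicator (k : ℝ) (S : Finset α) (l : α) : ℝ :=
  if l ∈ S then k else -1

lemma sum_centredIndicator (k : ℝ) (S D : Finset α) :
    ∑ l ∈ D, centredIndicator k S l = (k + 1) * ((D ∩ S).card : ℝ) - D.card := by
  have h (l : α) : centredIndicator k S l = (k + 1) * (if l ∈ S then 1 else 0) - 1 := by
    rw [centredIndicator]
    split_ifs <;> ring
  simp only [h, Finset.sum_sub_distrib, ← Finset.mul_sum, Finset.sum_boole,
    Finset.filter_mem_eq_inter, Finset.sum_const, nsmul_eq_mul, mul_one]

-- `k ^ #(L \ S)` is `(k + 1) ^ #L` times the probability of the random subset `S` of `L`.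
lemma sum_powerset_pow_mul_prod (k : ℝ) (L : Finset α) (u v : α → ℝ) :
    ∑ S ∈ L.powerset, k ^ (L \ S).card * ∏ l ∈ L, (if l ∈ S then u l else v l) =
      ∏ l ∈ L, (u l + k * v l) := by
  rw [Finset.prod_add]
  refine Finset.sum_congr rfl fun S hS => ?_
  rw [Finset.prod_ite, Finset.filter_mem_eq_inter, Finset.filter_notMem_eq_sdiff,
    Finset.inter_eq_right.mpr (Finset.mem_powerset.mp hS), Finset.prod_mul_distrib,
    Finset.prod_const]
  ring

lemma sum_powerset_pow (k : ℝ) (L : Finset α) :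
    ∑ S ∈ L.powerset, k ^ (L \ S).card = (k + 1) ^ L.card := by
  simpa only [ite_self, Finset.prod_const_one, mul_one, Finset.prod_const, add_comm] using
    sum_powerset_pow_mul_prod k L (fun _ => 1) (fun _ => 1)

lemma sum_powerset_pow_mul_centredIndicator (hl : l ∈ L) :
    ∑ S ∈ L.powerset, k ^ (L \ S).card * centredIndicator k S l = 0 := by
  have hprod (S : Finset α) : centredIndicator k S l =
      ∏ i ∈ L, if i ∈ S then (if i = l then k else 1) else (if i = l then -1 else 1) := by
    rw [Finset.prod_eq_single_of_mem l hl (fun i _ hi => by simp [hi]), centredIndicator]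
    simp
  simp only [hprod]
  rw [sum_powerset_pow_mul_prod]
  exact Finset.prod_eq_zero hl (by simp)

lemma sum_powerset_pow_mul_centredIndicator_mul (hl : l ∈ L) (hl' : l' ∈ L) (hne : l ≠ l') :
    ∑ S ∈ L.powerset, k ^ (L \ S).card * (centredIndicator k S l * centredIndicator k S l') =
      0 := by
  have hprod (S : Finset α) : centredIndicator k S l * centredIndicator k S l' =
      ∏ i ∈ L, if i ∈ S then (if i = l ∨ i = l' then k else 1)
        else (if i = l ∨ i = l' then -1 else 1) := by
    rw [Finset.prod_eq_mul_of_mem l l' hl hl' hne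
      (fun i _ hi => by simp [hi.1, hi.2]), centredIndicator, centredIndicator]
    simp
  simp only [hprod]
  rw [sum_powerset_pow_mul_prod]
  exact Finset.prod_eq_zero hl (by simp)

lemma sum_powerset_pow_mul_centredIndicator_sq (hl : l ∈ L) :
    ∑ S ∈ L.powerset, k ^ (L \ S).card * centredIndicator k S l ^ 2 =
      (k + 1) ^ L.card * k := by
  have hsq (S : Finset α) :
      centredIndicator k S l ^ 2 = (k - 1) * centredIndicator k S l + k := by
    rw [centredIndicator]
    split_ifs <;> ring
  calc _ = (k - 1) * ∑ S ∈ L.powerset, k ^ (L \ S).card * centredIndicator k S l +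
        (∑ S ∈ L.powerset, k ^ (L \ S).card) * k := by
        rw [Finset.mul_sum, Finset.sum_mul, ← Finset.sum_add_distrib]
        exact Finset.sum_congr rfl fun S _ => by rw [hsq]; ring
    _ = _ := by
        rw [sum_powerset_pow_mul_centredIndicator hl, sum_powerset_pow, mul_zero, zero_add]

lemma sum_powerset_pow_mul_card (k : ℝ) (L : Finset α) :
    ∑ S ∈ L.powerset, k ^ (L \ S).card * ((k + 1) * S.card) = (k + 1) ^ L.card * L.card := by
  have hcard : ∀ S ∈ L.powerset,
      (k + 1) * (S.card : ℝ) = ∑ l ∈ L, centredIndicator k S l + L.card := by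
    intro S hS
    rw [sum_centredIndicator, Finset.inter_eq_right.mpr (Finset.mem_powerset.mp hS)]
    ring
  calc _ = ∑ S ∈ L.powerset, (∑ l ∈ L, k ^ (L \ S).card * centredIndicator k S l +
        k ^ (L \ S).card * L.card) :=
        Finset.sum_congr rfl fun S hS => by rw [hcard S hS, mul_add, Finset.mul_sum]
    _ = _ := by
        rw [Finset.sum_add_distrib, Finset.sum_comm,
          Finset.sum_eq_zero fun l hl => sum_powerset_pow_mul_centredIndicator hl, zero_add,
          ← Finset.sum_mul, sum_powerset_pow]

lemma sum_powerset_pow_mul_deviation_sq (k : ℝ) (hD : D ⊆ L) :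
    ∑ S ∈ L.powerset, k ^ (L \ S).card * ((k + 1) * ((D ∩ S).card : ℝ) - D.card) ^ 2 =
      (k + 1) ^ L.card * k * D.card := by
  calc _ = ∑ l ∈ D, ∑ l' ∈ D, ∑ S ∈ L.powerset,
        k ^ (L \ S).card * (centredIndicator k S l * centredIndicator k S l') := by
        simp only [← sum_centredIndicator, sq, Finset.sum_mul_sum]
        simp only [Finset.mul_sum]
        rw [Finset.sum_comm]
        exact Finset.sum_congr rfl fun l _ => Finset.sum_comm
    _ = ∑ l ∈ D, (k + 1) ^ L.card * k := Finset.sum_congr rfl fun l hl => by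
        rw [Finset.sum_eq_single_of_mem l hl fun l' hl' hne =>
          sum_powerset_pow_mul_centredIndicator_mul (hD hl) (hD hl') hne.symm]
        simp only [← sq, sum_powerset_pow_mul_centredIndicator_sq (hD hl)]
    _ = _ := by rw [Finset.sum_const, nsmul_eq_mul]; ring

lemma sum_powerset_pow_mul_sum_deviation_sq_div_le {D : β → Finset α} (hk : 0 ≤ k)
    (B : Finset β) (hD : ∀ m, D m ⊆ L) :
    ∑ S ∈ L.powerset, k ^ (L \ S).card *
        ∑ m ∈ B, ((k + 1) * ((D m ∩ S).card : ℝ) - (D m).card) ^ 2 / (D m).card ≤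
      (k + 1) ^ L.card * (k * B.card) := by
  simp only [Finset.mul_sum]
  rw [Finset.sum_comm]
  calc _ ≤ ∑ m ∈ B, (k + 1) ^ L.card * k := Finset.sum_le_sum fun m _ => by
        simp only [← mul_div_assoc]
        rw [← Finset.sum_div, sum_powerset_pow_mul_deviation_sq k (hD m)]
        exact div_le_of_le_mul₀ (by positivity) (by positivity) le_rfl
    _ = _ := by rw [Finset.sum_const, nsmul_eq_mul]; ring

theorem exists_subset_sample {D : β → Finset α} {B : Finset β} (hk : 0 < k) (hL : L.Nonempty)
    (hB : B.Nonempty) (hD : ∀ m, D m ⊆ L) :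
    ∃ S ⊆ L, (k + 1) * S.card ≤ 2 * L.card ∧
      ∑ m ∈ B, ((k + 1) * ((D m ∩ S).card : ℝ) - (D m).card) ^ 2 / (D m).card ≤
        2 * (k * B.card) := by
  have hL₀ : (0 : ℝ) < L.card := mod_cast hL.card_pos
  have hB₀ : (0 : ℝ) < k * B.card := mul_pos hk (mod_cast hB.card_pos)
  set Q : Finset α → ℝ := fun S =>
    ∑ m ∈ B, ((k + 1) * ((D m ∩ S).card : ℝ) - (D m).card) ^ 2 / (D m).card
  have hQ (S : Finset α) : 0 ≤ Q S := Finset.sum_nonneg fun m _ => by positivity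
  have hmean : ∑ S ∈ L.powerset, k ^ (L \ S).card *
      ((k + 1) * S.card / L.card + Q S / (k * B.card)) ≤
        ∑ S ∈ L.powerset, k ^ (L \ S).card * 2 := by
    simp only [mul_add, ← mul_div_assoc]
    rw [Finset.sum_add_distrib, ← Finset.sum_div, ← Finset.sum_div, ← Finset.sum_mul,
      sum_powerset_pow]
    have hsize := (div_eq_iff hL₀.ne').mpr (sum_powerset_pow_mul_card k L)
    have hdeviation := (div_le_iff₀ hB₀).mpr
      (sum_powerset_pow_mul_sum_deviation_sq_div_le hk.le B hD)
    linarith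
  obtain ⟨S, hS, hle⟩ := Finset.exists_le_of_sum_le L.powerset_nonempty hmean
  have hle' : (k + 1) * S.card / L.card + Q S / (k * B.card) ≤ 2 :=
    le_of_mul_le_mul_left hle (by positivity)
  refine ⟨S, Finset.mem_powerset.mp hS, ?_, ?_⟩
  · exact (div_le_iff₀ hL₀).mp (le_of_add_le_of_nonneg_left hle' (div_nonneg (hQ S) hB₀.le))
  · exact (div_le_iff₀ hB₀).mp (le_of_add_le_of_nonneg_right hle' (by positivity))

end Sampling

section Interpolation

variable {K : Type*} [Field K]

lemma finrank_restrictDegree (σ K : Type*) [Fintype σ] [Field K] (w : ℕ) :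
    Module.finrank K (restrictDegree σ K w) = (w + 1) ^ Fintype.card σ := by
  classical
  let e : {n : σ →₀ ℕ | ∀ i, n i ≤ w} ≃ (σ → Fin (w + 1)) :=
    { toFun := fun n i => ⟨n.1 i, Nat.lt_succ_of_le (n.2 i)⟩
      invFun := fun t =>
        ⟨Finsupp.equivFunOnFinite.symm fun i => (t i : ℕ), fun i => Nat.lt_succ_iff.mp (t i).2⟩
      left_inv := fun n => Subtype.ext (Finsupp.ext fun _ => rfl)
      right_inv := fun _ => rfl }
  rw [restrictDegree,
    Module.finrank_eq_nat_card_basis (basisRestrictSupport K {n : σ →₀ ℕ | ∀ i, n i ≤ w}),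
    Nat.card_congr e]
  simp

lemma totalDegree_le_of_mem_restrictDegree {σ R : Type*} [Fintype σ] [CommSemiring R] {w : ℕ}
    {f : MvPolynomial σ R} (hf : f ∈ restrictDegree σ R w) :
    f.totalDegree ≤ Fintype.card σ * w := by
  refine Finset.sup_le fun n hn => ?_
  rw [Finsupp.sum_fintype _ _ fun _ => rfl]
  exact Finset.sum_le_card_nsmul _ _ _ fun i _ => (mem_restrictDegree σ f w).mp hf n hn i

lemma exists_totalDegree_le_eval_eq_zero {σ : Type*} [Fintype σ] {w : ℕ} (P : Finset (σ → K))
    (hP : P.card < (w + 1) ^ Fintype.card σ) :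
    ∃ f : MvPolynomial σ K, f ≠ 0 ∧ f.totalDegree ≤ Fintype.card σ * w ∧
      ∀ x ∈ P, eval x f = 0 := by
  let E : restrictDegree σ K w →ₗ[K] (P → K) :=
    (LinearMap.pi fun x : P => (aeval x.1).toLinearMap).comp (restrictDegree σ K w).subtype
  have hker : LinearMap.ker E ≠ ⊥ := by
    refine LinearMap.ker_ne_bot_of_finrank_lt ?_
    rwa [Module.finrank_fintype_fun_eq_card, Fintype.card_coe, finrank_restrictDegree]
  obtain ⟨f, hf, hf₀⟩ := (Submodule.ne_bot_iff _).mp hker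
  exact ⟨f, fun h => hf₀ (Subtype.ext h), totalDegree_le_of_mem_restrictDegree f.2,
    fun x hx => congrFun (LinearMap.mem_ker.mp hf) ⟨x, hx⟩⟩

lemma exists_vanishesOn_of_card_le [Infinite K] (i : Fin 2) {w : ℕ} (S : Finset (SliceLine K))
    (hS : 3 * S.card ≤ w ^ 2) :
    ∃ f : MvPolynomial (Fin 3) K, f ≠ 0 ∧ f.totalDegree ≤ 3 * w ∧ ∀ l ∈ S, VanishesOn i f l := by
  classical
  obtain ⟨Y, hY⟩ := Infinite.exists_subset_card_eq K (3 * w + 1)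
  have hcard : ((S ×ˢ Y).image fun q => linePoint i q.1 q.2).card <
      (w + 1) ^ Fintype.card (Fin 3) := by
    refine Finset.card_image_le.trans_lt ?_
    rw [Finset.card_product, hY, Fintype.card_fin]
    nlinarith only [hS]
  obtain ⟨f, hf₀, hdeg, hzero⟩ := exists_totalDegree_le_eval_eq_zero _ hcard
  rw [Fintype.card_fin] at hdeg
  refine ⟨f, hf₀, hdeg, fun l hl => vanishesOn_of_totalDegree_lt_card Y (fun u hu => ?_) ?_⟩
  · exact hzero _ (Finset.mem_image.mpr ⟨(l, u), Finset.mk_mem_product hl hu, rfl⟩)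
  · rw [hY]
    exact Nat.lt_succ_of_le hdeg

end Interpolation

section IncidenceBound

variable {K : Type*} [Field K] {M : ℝ} {L₁ L₂ : Finset (SliceLine K)}

lemma le_add_deviation_sq_div {k t d h : ℝ} (hk : 0 ≤ k) (hd : 0 ≤ d) (ht : 0 ≤ t) (hht : h ≤ t) :
    d ≤ 4 * (k + 1) * t + 2 * (((k + 1) * h - d) ^ 2 / d) := by
  rcases le_or_gt d (4 * (k + 1) * t) with hsmall | hlarge
  · exact hsmall.trans (le_add_of_nonneg_right (by positivity))
  · have hd₀ : 0 < d := hlarge.trans_le' (by positivity)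
    have hh : (k + 1) * h ≤ d / 4 := by
      nlinarith [mul_le_mul_of_nonneg_left hht (by positivity : 0 ≤ k + 1)]
    have : d / 2 ≤ ((k + 1) * h - d) ^ 2 / d := by
      rw [le_div_iff₀ hd₀]
      nlinarith
    nlinarith [mul_nonneg (add_nonneg hk zero_le_one) ht]

open Classical in
lemma incidences_le_of_sample {k : ℝ} {t : ℕ} {S R : Finset (SliceLine K)} (hk : 0 ≤ k)
    (hS : S ⊆ L₁)
    (hdeviation : ∑ m ∈ L₂, ((k + 1) * ((L₁.bipartiteAbove Meets m ∩ S).card : ℝ) -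
      (L₁.bipartiteAbove Meets m).card) ^ 2 / (L₁.bipartiteAbove Meets m).card ≤
        2 * (k * L₂.card))
    (hR : R ⊆ L₂) (hfew : ∀ m ∈ R, (S.bipartiteAbove Meets m).card ≤ t) :
    (incidences L₁ R : ℝ) ≤ 4 * (k + 1) * (t + 1) * L₂.card := by
  have hinter (m : SliceLine K) : L₁.bipartiteAbove Meets m ∩ S = S.bipartiteAbove Meets m := by
    rw [Finset.bipartiteAbove, Finset.filter_inter, Finset.inter_eq_right.mpr hS]; rfl
  simp only [hinter] at hdeviation
  rw [incidences_comm, incidences, Nat.cast_sum]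
  calc _ ≤ ∑ m ∈ R, (4 * (k + 1) * t + 2 * (((k + 1) * ((S.bipartiteAbove Meets m).card : ℝ) -
        (L₁.bipartiteAbove Meets m).card) ^ 2 / (L₁.bipartiteAbove Meets m).card)) :=
        Finset.sum_le_sum fun m hm =>
          le_add_deviation_sq_div hk (by positivity) (by positivity) (mod_cast hfew m hm)
    _ ≤ ∑ m ∈ L₂, (4 * (k + 1) * t + 2 * (((k + 1) * ((S.bipartiteAbove Meets m).card : ℝ) -
        (L₁.bipartiteAbove Meets m).card) ^ 2 / (L₁.bipartiteAbove Meets m).card)) :=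
        Finset.sum_le_sum_of_subset_of_nonneg hR fun m _ _ => by positivity
    _ ≤ 4 * (k + 1) * (t + 1) * L₂.card := by
        rw [Finset.sum_add_distrib, Finset.sum_const, nsmul_eq_mul, ← Finset.mul_sum]
        nlinarith [Nat.cast_nonneg (α := ℝ) L₂.card]

lemma incidences_le_of_card_lt (hM : 0 ≤ M) (hsmall : L₁.card < 65536) :
    (incidences L₁ L₂ : ℝ) ≤
      20000000 * (√L₁.card * √L₂.card * (√L₁.card + √L₂.card + M)) := by
  have hproduct : (incidences L₁ L₂ : ℝ) ≤ √L₁.card ^ 2 * √L₂.card ^ 2 := by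
    rw [Real.sq_sqrt (by positivity), Real.sq_sqrt (by positivity)]
    exact_mod_cast incidences_le_card_mul_card L₁ L₂
  have hsqrt : √(L₁.card : ℝ) ≤ 256 := by
    rw [Real.sqrt_le_left (by norm_num)]
    norm_num
    exact_mod_cast hsmall.le
  calc (incidences L₁ L₂ : ℝ) ≤ √L₁.card * (√L₁.card * √L₂.card ^ 2) := by linarith
    _ ≤ 20000000 * (√L₁.card * √L₂.card ^ 2) := by gcongr; linarith
    _ = 20000000 * (√L₁.card * √L₂.card * (0 + √L₂.card + 0)) := by ring
    _ ≤ _ := by gcongr; positivity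

variable [Infinite K]

open Classical in
lemma exists_vanishesOn_incidences_le
    (hinj : Set.InjOn SliceLine.base (L₁ : Set (SliceLine K))) (hL₂ : L₂.Nonempty)
    (hlarge : 65536 ≤ L₁.card) :
    ∃ f : MvPolynomial (Fin 3) K, f ≠ 0 ∧ (f.totalDegree : ℝ) ≤ 3 * (√L₁.card / 128) ∧
      (incidences L₁ {m ∈ L₂ | ¬ VanishesOn 1 f m} : ℝ) ≤
        8 * 393216 * (√L₁.card * L₂.card) := by
  set a := √(L₁.card : ℝ) with ha
  have ha_sq : a ^ 2 = L₁.card := Real.sq_sqrt (by positivity)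
  have ha_large : 256 ≤ a := Real.le_sqrt_of_sq_le (by norm_num; exact_mod_cast hlarge)
  set w := ⌈a / 256⌉₊
  have hw_ge : a / 256 ≤ w := Nat.le_ceil _
  have hw_le : (w : ℝ) ≤ a / 128 := by
    linarith [Nat.ceil_lt_add_one (show 0 ≤ a / 256 by positivity)]
  -- `393216 = 6 * 256 ^ 2` makes the sample small enough to lie on a surface of degree `3 * w`.
  have hsub (m : SliceLine K) : L₁.bipartiteAbove Meets m ⊆ L₁ := Finset.filter_subset _ _
  obtain ⟨S, hS, hS_card, hS_deviation⟩ := exists_subset_sample (k := 393215) (by norm_num)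
    (Finset.card_pos.mp (hlarge.trans_lt' (by norm_num))) hL₂ hsub
  have hS_small : 3 * S.card ≤ w ^ 2 := by
    have : (3 * S.card : ℝ) ≤ w ^ 2 := by nlinarith [pow_le_pow_left₀ (by positivity) hw_ge 2]
    exact_mod_cast this
  obtain ⟨f, hf₀, hdeg, hfS⟩ := exists_vanishesOn_of_card_le 0 S hS_small
  refine ⟨f, hf₀, ?_, ?_⟩
  · linarith [show (f.totalDegree : ℝ) ≤ 3 * w from mod_cast hdeg]
  · have hfew : ∀ m ∈ ({m ∈ L₂ | ¬ VanishesOn 1 f m} : Finset _),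
        (S.bipartiteAbove Meets m).card ≤ 3 * w := by
      intro m hm
      contrapose! hm
      refine fun hm' => (Finset.mem_filter.mp hm').2 ?_
      exact vanishesOn_of_totalDegree_lt_card_meets
        (hinj.mono fun l hl => hS (Finset.mem_filter.mp hl).1)
        (fun l hl => hfS l (Finset.mem_filter.mp hl).1)
        (fun l hl => (Finset.mem_filter.mp hl).2) (hdeg.trans_lt hm)
    refine (incidences_le_of_sample (by norm_num) hS hS_deviation (Finset.filter_subset _ _)
      hfew).trans ?_
    push_cast
    nlinarith [Nat.cast_nonneg (α := ℝ) L₂.card]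

open Classical in
lemma exists_core_incidences_le_of_ne_zero {f : MvPolynomial (Fin 3) K} (hf : f ≠ 0)
    (hchar : ∀ k : ℕ, 0 < k → k ≤ f.totalDegree → (k : K) ≠ 0)
    (hL₁ : WellSpread M L₁) (hL₂ : WellSpread M L₂) :
    ∃ S₁ ⊆ L₁, ∃ S₂ ⊆ L₂, S₁.card ≤ 16 * f.totalDegree ^ 2 ∧ S₂.card ≤ 16 * f.totalDegree ^ 2 ∧
      (incidences L₁ L₂ : ℝ) ≤ incidences S₁ L₂ + incidences L₁ S₂ +
        f.totalDegree * (2 * L₁.card + L₂.card) + M * (√L₁.card * √L₂.card) +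
          incidences L₁ {m ∈ L₂ | ¬ VanishesOn 1 f m} := by
  have hT₁ : {l ∈ L₁ | VanishesOn 0 f l} ⊆ L₁ := Finset.filter_subset _ _
  have hT₂ : {m ∈ L₂ | VanishesOn 1 f m} ⊆ L₂ := Finset.filter_subset _ _
  obtain ⟨S₁, hS₁, S₂, hS₂, hcard₁, hcard₂, hcore⟩ := hasSmallCore_of_vanishesOn hf hchar
    (hL₁.mono hT₁) (hL₂.mono hT₂) (fun l hl => (Finset.mem_filter.mp hl).2)
    (fun m hm => (Finset.mem_filter.mp hm).2)
  refine ⟨S₁, hS₁.trans hT₁, S₂, hS₂.trans hT₂, hcard₁, hcard₂, ?_⟩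
  have hM := hL₁.nonneg
  have hsplit : (incidences L₁ L₂ : ℝ) ≤
      incidences {l ∈ L₁ | VanishesOn 0 f l} {m ∈ L₂ | VanishesOn 1 f m} +
        ({l ∈ L₁ | ¬ VanishesOn 0 f l}.card * f.totalDegree +
          incidences L₁ {m ∈ L₂ | ¬ VanishesOn 1 f m}) :=
    mod_cast incidences_le_filter_vanishesOn (i := 0) (f := f) hL₂.injOn_base
  calc (incidences L₁ L₂ : ℝ) ≤ (incidences S₁ {m ∈ L₂ | VanishesOn 1 f m} +
        incidences {l ∈ L₁ | VanishesOn 0 f l} S₂ +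
        f.totalDegree * ({l ∈ L₁ | VanishesOn 0 f l}.card + {m ∈ L₂ | VanishesOn 1 f m}.card) +
        M * (√({l ∈ L₁ | VanishesOn 0 f l}.card) * √({m ∈ L₂ | VanishesOn 1 f m}.card))) +
        ({l ∈ L₁ | ¬ VanishesOn 0 f l}.card * f.totalDegree +
          incidences L₁ {m ∈ L₂ | ¬ VanishesOn 1 f m}) := hsplit.trans (by gcongr)
    _ ≤ (incidences S₁ L₂ + incidences L₁ S₂ + f.totalDegree * (L₁.card + L₂.card) +
        M * (√L₁.card * √L₂.card)) + (L₁.card * f.totalDegree +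
          incidences L₁ {m ∈ L₂ | ¬ VanishesOn 1 f m}) := by
        gcongr
        · exact incidences_mono_right S₁ hT₂
        · exact incidences_mono_left hT₁ S₂
        · exact Finset.filter_subset _ _
    _ = _ := by ring

lemma exists_core_incidences_le {p : ℕ} (hp : ∀ k : ℕ, 0 < k → k < p → (k : K) ≠ 0)
    (hL₁ : WellSpread M L₁) (hL₂ : WellSpread M L₂) (hle : L₁.card ≤ L₂.card)
    (hcard : L₁.card ≤ p ^ 2) (hlarge : 65536 ≤ L₁.card) :
    ∃ S₁ ⊆ L₁, ∃ S₂ ⊆ L₂, 64 * S₁.card ≤ L₁.card ∧ 64 * S₂.card ≤ L₁.card ∧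
      (incidences L₁ L₂ : ℝ) ≤
        10000000 * (√L₁.card * √L₂.card * (√L₁.card + √L₂.card + M)) +
          incidences S₁ L₂ + incidences L₁ S₂ := by
  classical
  obtain ⟨f, hf, hdeg, hoff⟩ := exists_vanishesOn_incidences_le hL₁.injOn_base
    (Finset.card_pos.mp (show 0 < L₂.card by lia)) hlarge
  set a := √(L₁.card : ℝ) with ha
  set b := √(L₂.card : ℝ) with hb
  have ha_sq : a ^ 2 = L₁.card := Real.sq_sqrt (by positivity)
  have hb_sq : b ^ 2 = L₂.card := Real.sq_sqrt (by positivity)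
  have ha_pos : 0 < a := Real.sqrt_pos.mpr (mod_cast (by lia : 0 < L₁.card))
  have hab : a ≤ b := Real.sqrt_le_sqrt (mod_cast hle)
  have hdeg_lt : f.totalDegree < p := by
    have hap : a ≤ p := (Real.sqrt_le_left (by positivity)).mpr (mod_cast hcard)
    have : (f.totalDegree : ℝ) < p := by linarith
    exact_mod_cast this
  have hsmall (n : ℕ) (hn : n ≤ 16 * f.totalDegree ^ 2) : 64 * n ≤ L₁.card := by
    have hn' : (n : ℝ) ≤ 16 * f.totalDegree ^ 2 := mod_cast hn
    have : (64 * n : ℝ) ≤ L₁.card := by nlinarith [pow_le_pow_left₀ (by positivity) hdeg 2]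
    exact_mod_cast this
  obtain ⟨S₁, hS₁, S₂, hS₂, hcard₁, hcard₂, hcore⟩ := exists_core_incidences_le_of_ne_zero hf
    (fun k hk hk' => hp k hk (hk'.trans_lt hdeg_lt)) hL₁ hL₂
  refine ⟨S₁, hS₁, S₂, hS₂, hsmall _ hcard₁, hsmall _ hcard₂, ?_⟩
  have hM := hL₁.nonneg
  have hdegree_term : (f.totalDegree : ℝ) * (2 * L₁.card + L₂.card) ≤ 3 * (a * b * b) :=
    calc (f.totalDegree : ℝ) * (2 * L₁.card + L₂.card) ≤ a * (2 * (b * b) + b * b) := by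
          rw [← ha_sq, ← hb_sq, sq, sq]
          gcongr
          linarith
      _ = 3 * (a * b * b) := by ring
  rw [← hb_sq] at hoff
  nlinarith [mul_nonneg ha_pos.le (hab.trans' ha_pos.le), show 0 ≤ a * b * a by positivity,
    show 0 ≤ a * b * b by positivity, show 0 ≤ a * b * M by positivity]

theorem incidences_le {p : ℕ} (hp : ∀ k : ℕ, 0 < k → k < p → (k : K) ≠ 0)
    (hL₁ : WellSpread M L₁) (hL₂ : WellSpread M L₂)
    (hcard : L₁.card ≤ p ^ 2 ∨ L₂.card ≤ p ^ 2) :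
    (incidences L₁ L₂ : ℝ) ≤
      20000000 * (√L₁.card * √L₂.card * (√L₁.card + √L₂.card + M)) := by
  induction hn : L₁.card + L₂.card using Nat.strong_induction_on generalizing L₁ L₂ with
  | _ n ih =>
  wlog hle : L₁.card ≤ L₂.card generalizing L₁ L₂
  · have := this hL₂ hL₁ hcard.symm (by lia) (by lia)
    rw [incidences_comm]
    convert this using 2
    ring
  rcases lt_or_ge L₁.card 65536 with hsmall | hlarge
  · exact incidences_le_of_card_lt hL₁.nonneg hsmall
  obtain ⟨S₁, hS₁, S₂, hS₂, hcard₁, hcard₂, hcore⟩ :=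
    exists_core_incidences_le hp hL₁ hL₂ hle (by lia) hlarge
  have hstep₁ := ih (S₁.card + L₂.card) (by lia) (hL₁.mono hS₁) hL₂ (by lia) rfl
  have hstep₂ := ih (L₁.card + S₂.card) (by lia) hL₁ (hL₂.mono hS₂) (by lia) rfl
  have hsqrt (n : ℕ) (hn : 64 * n ≤ L₁.card) : √(n : ℝ) ≤ √L₁.card / 8 := by
    rw [Real.sqrt_le_left (by positivity), div_pow, Real.sq_sqrt (by positivity)]
    linarith [show (64 * n : ℝ) ≤ L₁.card from mod_cast hn]
  have hM := hL₁.nonneg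
  have hab : √(L₁.card : ℝ) ≤ √L₂.card := Real.sqrt_le_sqrt (mod_cast hle)
  have hs₁ := hsqrt _ hcard₁
  have hs₂ := hsqrt _ hcard₂
  have hshrink₁ : √S₁.card * √L₂.card * (√S₁.card + √L₂.card + M) ≤
      √L₁.card / 8 * √L₂.card * (√L₁.card + √L₂.card + M) := by
    gcongr
  have hshrink₂ : √L₁.card * √S₂.card * (√L₁.card + √S₂.card + M) ≤
      √L₁.card * (√L₂.card / 8) * (√L₁.card + √L₂.card + M) := by
    gcongr
    linarith
  have : 0 ≤ √L₁.card * √L₂.card * (√L₁.card + √L₂.card + M) := by positivity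
  linarith

end IncidenceBound

end AffineImage

namespace AffineImage

/-! ### Maps that are rich on a set -/

section Collinearity

variable {F V : Type*} [Field F] [AddCommGroup V] [Module F V] {S : Set V}

lemma collinear_of_forall_dual
    (h : ∀ φ ψ : Module.Dual F V, ∀ l ∈ S, ∀ m ∈ S, ∀ n ∈ S,
      φ (l - n) * ψ (m - n) = φ (m - n) * ψ (l - n)) :
    Collinear F S := by
  rcases S.subsingleton_or_nontrivial with hS | ⟨n, hn, m, hm, hnm⟩
  · exact hS.induction_on (collinear_empty F V) (collinear_singleton F)
  have hsub : m - n ≠ 0 := sub_ne_zero.mpr hnm.symm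
  obtain ⟨ψ, hψ⟩ : ∃ ψ : Module.Dual F V, ψ (m - n) ≠ 0 := by
    by_contra! hzero
    exact hsub ((Module.forall_dual_apply_eq_zero_iff F _).mp hzero)
  refine (collinear_iff_of_mem hn).mpr ⟨m - n, fun l hl => ⟨ψ (l - n) / ψ (m - n), ?_⟩⟩
  rw [vadd_eq_add, ← sub_eq_iff_eq_add, ← sub_eq_zero, ← Module.forall_dual_apply_eq_zero_iff F]
  intro φ
  rw [map_sub, map_smul, smul_eq_mul, sub_eq_zero, div_mul_eq_mul_div, eq_div_iff hψ,
    h φ ψ l hl m hm n hn, mul_comm]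

lemma collinear_of_forall_exists_eq_mul_add_mul {K : Type*} [Field K] [Algebra F K] {B D : V → K}
    (hone : ∃ P Q : K, ∀ l ∈ S, P * B l + Q * D l = 1)
    (hdual : ∀ φ : Module.Dual F V, ∃ P Q : K, ∀ l ∈ S, algebraMap F K (φ l) = P * B l + Q * D l) :
    Collinear F S := by
  obtain ⟨P, Q, hPQ⟩ := hone
  refine collinear_of_forall_dual fun φ ψ l hl m hm n hn => (algebraMap F K).injective ?_
  obtain ⟨P₁, Q₁, h₁⟩ := hdual φ
  obtain ⟨P₂, Q₂, h₂⟩ := hdual ψ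
  simp only [map_mul, map_sub, h₁ l hl, h₁ m hm, h₁ n hn, h₂ l hl, h₂ m hm, h₂ n hn]
  have hl₁ := hPQ l hl
  have hm₁ := hPQ m hm
  have hn₁ := hPQ n hn
  linear_combination (P₂ * Q₁ - P₁ * Q₂) * ((B l * D m - B m * D l) * hn₁ +
    (B m * D n - B n * D m) * hl₁ + (B n * D l - B l * D n) * hm₁)

end Collinearity

section Collisions

variable {ι κ : Type*} [DecidableEq κ] {s : Finset ι} {t : Finset κ} {f : ι → κ}

lemma sum_sq_card_fiber_eq (hf : Set.MapsTo f s t) :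
    ∑ y ∈ t, {i ∈ s | f i = y}.card ^ 2 = {z ∈ s ×ˢ s | f z.1 = f z.2}.card := by
  rw [Finset.card_eq_sum_card_fiberwise (f := fun z => f z.1) (t := t)
    fun z hz => hf (Finset.mem_product.mp (Finset.mem_filter.mp hz).1).1]
  refine Finset.sum_congr rfl fun y _ => ?_
  rw [sq, ← Finset.card_product]
  congr 1
  ext z
  grind

lemma sq_card_le_card_mul_card_collisions (hf : Set.MapsTo f s t) :
    s.card ^ 2 ≤ t.card * {z ∈ s ×ˢ s | f z.1 = f z.2}.card := by
  rw [Finset.card_eq_sum_card_fiberwise hf, ← sum_sq_card_fiber_eq hf]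
  exact sq_sum_le_card_mul_sum_sq

lemma sq_sum_comp_le_card_collisions_mul_sum_sq (hf : Set.MapsTo f s t) (w : κ → ℝ) :
    (∑ i ∈ s, w (f i)) ^ 2 ≤
      ({z ∈ s ×ˢ s | f z.1 = f z.2}.card : ℝ) * ∑ y ∈ t, w y ^ 2 := by
  have hfiber : ∑ i ∈ s, w (f i) = ∑ y ∈ t, ({i ∈ s | f i = y}.card : ℝ) * w y := by
    simp_rw [← nsmul_eq_mul, ← Finset.sum_const]
    exact (Finset.sum_fiberwise_of_maps_to' hf w).symm
  rw [hfiber, ← sum_sq_card_fiber_eq hf]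
  push_cast
  exact Finset.sum_mul_sq_le_sq_mul_sq _ _ _

end Collisions

section Richness

variable {F : Type*} [Field F] [DecidableEq F] {A : Finset F} {G : Finset (F × F)} {k : ℕ}

/-- The number of points of `A` that the affine map `x ↦ g.1 * x + g.2` sends into `A`. -/
def richness (A : Finset F) (g : F × F) : ℕ :=
  {x ∈ A | g.1 * x + g.2 ∈ A}.card

lemma richness_le_card (A : Finset F) (g : F × F) : richness A g ≤ A.card :=
  Finset.card_filter_le _ _

lemma richness_eq_card_filter_product (A : Finset F) (g : F × F) :
    richness A g = {q ∈ A ×ˢ A | g.1 * q.1 + g.2 = q.2}.card := by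
  simp only [richness, Finset.card_filter, Finset.sum_product, Finset.sum_ite_eq]

lemma card_mul_le_of_injOn_eval {ι : Type*} {S : Finset ι} {g : ι → F × F}
    (hrich : ∀ i ∈ S, k ≤ richness A (g i)) (y₀ : F)
    (hinj : ∀ y ≠ y₀, Set.InjOn (fun i => (g i).1 * y + (g i).2) S) :
    S.card * (k - 1) ≤ A.card ^ 2 := by
  calc S.card * (k - 1)
      ≤ (S.sigma fun i => {y ∈ A | (g i).1 * y + (g i).2 ∈ A}.erase y₀).card := by
        rw [Finset.card_sigma]
        refine Finset.card_nsmul_le_sum _ _ _ fun i hi => ?_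
        exact (Nat.sub_le_sub_right (hrich i hi) 1).trans Finset.pred_card_le_card_erase
    _ ≤ (A ×ˢ A).card := by
        refine Finset.card_le_card_of_injOn (fun s => (s.2, (g s.1).1 * s.2 + (g s.1).2)) ?_ ?_
        · rintro ⟨i, y⟩ hs
          simp_all
        · rintro ⟨i, y⟩ hi ⟨j, z⟩ hj heq
          obtain ⟨rfl, hval⟩ := Prod.mk.inj heq
          simp only [Finset.coe_sigma, Set.mem_sigma_iff, Finset.mem_coe, Finset.mem_erase] at hi hj
          rw [hinj y hi.2.1 hi.1 hj.1 hval]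
    _ = A.card ^ 2 := by rw [Finset.card_product, sq]

lemma card_le_or_card_mul_le_of_collinear {S : Finset ((F × F) × F)} (hS : S ⊆ G ×ˢ A)
    (hG : ∀ g ∈ G, k ≤ richness A g) (hcol : Collinear F (S : Set ((F × F) × F))) :
    S.card ≤ A.card ∨ S.card * (k - 1) ≤ A.card ^ 2 := by
  obtain ⟨q₀, v, hv⟩ := (collinear_iff_exists_forall_eq_smul_vadd (k := F) _).mp hcol
  by_cases hconst : v.1 = 0
  · refine .inl (Finset.card_le_card_of_injOn Prod.snd
      (fun q hq => (Finset.mem_product.mp (hS hq)).2) fun q hq r hr hqr => Prod.ext ?_ hqr)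
    obtain ⟨s, rfl⟩ := hv q hq
    obtain ⟨t, rfl⟩ := hv r hr
    simp [hconst]
  · refine .inr (card_mul_le_of_injOn_eval (g := Prod.fst) (y₀ := -v.1.2 / v.1.1)
      (fun q hq => hG _ (Finset.mem_product.mp (hS hq)).1) fun y hy q hq r hr hqr => ?_)
    have hdir : v.1.1 * y + v.1.2 ≠ 0 := by
      intro hzero
      rcases eq_or_ne v.1.1 0 with hslope | hslope
      · exact hconst (Prod.ext hslope (by simpa [hslope] using hzero))
      · exact hy (by rw [eq_div_iff hslope]; linear_combination hzero)
    obtain ⟨s, rfl⟩ := hv q hq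
    obtain ⟨t, rfl⟩ := hv r hr
    have hst : (s - t) * (v.1.1 * y + v.1.2) = 0 := by
      simp only [vadd_eq_add, Prod.fst_add, Prod.snd_add, Prod.smul_fst, Prod.smul_snd,
        smul_eq_mul] at hqr
      linear_combination hqr
    rw [sub_eq_zero.mp ((mul_eq_zero.mp hst).resolve_right hdir)]

lemma card_le_of_collinear {S : Finset ((F × F) × F)} (hS : S ⊆ G ×ˢ A) (hk : 2 ≤ k)
    (hG : ∀ g ∈ G, k ≤ richness A g) (hcol : Collinear F (S : Set ((F × F) × F))) :
    (S.card : ℝ) ≤ A.card + 2 * (A.card : ℝ) ^ 2 / k := by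
  rcases card_le_or_card_mul_le_of_collinear hS hG hcol with hle | hle
  · exact (Nat.cast_le.mpr hle).trans (le_add_of_nonneg_right (by positivity))
  · refine le_add_of_nonneg_of_le (by positivity) ((le_div_iff₀ (by positivity)).mpr ?_)
    have : S.card * k ≤ 2 * (S.card * (k - 1)) := by
      rw [mul_left_comm]
      exact Nat.mul_le_mul_left _ (by lia)
    exact_mod_cast this.trans (Nat.mul_le_mul_left 2 hle)

lemma sum_richness_eq (A : Finset F) (G : Finset (F × F)) :
    ∑ g ∈ G, richness A g = {q ∈ G ×ˢ A | q.1.1 * q.2 + q.1.2 ∈ A}.card := by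
  simp only [richness, Finset.card_filter, Finset.sum_product]

lemma sq_card_mul_le_card_mul_card_collisions (hG : ∀ g ∈ G, k ≤ richness A g) :
    (G.card * k) ^ 2 ≤ A.card * {z ∈ (G ×ˢ A) ×ˢ (G ×ˢ A) |
      z.1.1.1 * z.1.2 + z.1.1.2 = z.2.1.1 * z.2.2 + z.2.1.2}.card := by
  calc (G.card * k) ^ 2 ≤ {q ∈ G ×ˢ A | q.1.1 * q.2 + q.1.2 ∈ A}.card ^ 2 := by
        rw [← sum_richness_eq]
        gcongr
        exact Finset.card_nsmul_le_sum _ _ _ hG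
    _ ≤ _ := sq_card_le_card_mul_card_collisions fun q hq => (Finset.mem_filter.mp hq).2
    _ ≤ _ := by
        gcongr <;> exact Finset.filter_subset _ _

lemma card_collisions_eq (G : Finset (F × F)) (A : Finset F) :
    {z ∈ (G ×ˢ A) ×ˢ (G ×ˢ A) | z.1.1.1 * z.1.2 + z.1.1.2 = z.2.1.1 * z.2.2 + z.2.1.2}.card =
      {z ∈ (G ×ˢ A) ×ˢ (G ×ˢ A) | z.1.1.1 * z.2.2 + z.1.1.2 = z.2.1.1 * z.1.2 + z.2.1.2}.card := by
  refine Finset.card_nbij' (fun z => ((z.1.1, z.2.2), (z.2.1, z.1.2)))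
    (fun z => ((z.1.1, z.2.2), (z.2.1, z.1.2))) ?_ ?_ (fun _ _ => rfl) fun _ _ => rfl <;>
  · intro z hz
    simp_all

end Richness

section Shear

open Polynomial

variable {F : Type*} [Field F]

/-- The numerator of the base of `shearLine q`. -/
noncomputable def shearNum (q : (F × F) × F) : F[X] :=
  C q.2 - C q.1.1 * X - C q.1.2 * X ^ 2

/-- The common denominator of the parameters of `shearLine q`. -/
noncomputable def shearDen (q : (F × F) × F) : F[X] :=
  1 - C q.1.1 * X ^ 2

/-- The line over `F(X)` attached to the affine map `q.1` and the point `q.2`: the line with base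
`q.2`, slope `q.1.1` and height `q.1.2`, transformed by a generic linear map that separates the
bases. The symmetry of the transformation is what makes it preserve the relation `Meets`. -/
noncomputable def shearLine (q : (F × F) × F) : SliceLine (RatFunc F) where
  base := algebraMap F[X] (RatFunc F) (shearNum q) / algebraMap F[X] (RatFunc F) (shearDen q)
  slope := RatFunc.C q.1.1 / algebraMap F[X] (RatFunc F) (shearDen q)
  height := RatFunc.C q.1.2 / algebraMap F[X] (RatFunc F) (shearDen q)

lemma algebraMap_shearNum (q : (F × F) × F) :
    algebraMap F[X] (RatFunc F) (shearNum q) =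
      RatFunc.C q.2 - RatFunc.C q.1.1 * RatFunc.X - RatFunc.C q.1.2 * RatFunc.X ^ 2 := by
  simp [shearNum]

lemma algebraMap_shearDen (q : (F × F) × F) :
    algebraMap F[X] (RatFunc F) (shearDen q) = 1 - RatFunc.C q.1.1 * RatFunc.X ^ 2 := by
  simp [shearDen]

lemma algebraMap_shearDen_ne_zero (q : (F × F) × F) :
    algebraMap F[X] (RatFunc F) (shearDen q) ≠ 0 := by
  refine RatFunc.algebraMap_ne_zero fun hzero => ?_
  simpa [shearDen] using congrArg (eval 0) hzero

lemma shearNum_mul_shearDen (q r : (F × F) × F) :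
    shearNum q * shearDen r = C q.2 - C q.1.1 * X - C (q.1.2 + q.2 * r.1.1) * X ^ 2 +
      C (q.1.1 * r.1.1) * X ^ 3 + C (q.1.2 * r.1.1) * X ^ 4 := by
  simp only [shearNum, shearDen, C_add, C_mul]
  ring

lemma injective_base_shearLine :
    Function.Injective fun q : (F × F) × F => (shearLine q).base := by
  intro q r hqr
  have hcross : shearNum q * shearDen r = shearNum r * shearDen q := by
    simp only [shearLine, div_eq_div_iff (algebraMap_shearDen_ne_zero q)
      (algebraMap_shearDen_ne_zero r), ← map_mul] at hqr
    exact RatFunc.algebraMap_injective F hqr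
  rw [shearNum_mul_shearDen, shearNum_mul_shearDen] at hcross
  have hbase : q.2 = r.2 := by
    simpa [coeff_X, coeff_C, coeff_X_pow, -map_mul, -map_add] using congrArg (coeff · 0) hcross
  have hslope : q.1.1 = r.1.1 := by
    simpa [coeff_X, coeff_C, coeff_X_pow, -map_mul, -map_add] using congrArg (coeff · 1) hcross
  have hheight : q.1.2 = r.1.2 := by
    simpa [coeff_X, coeff_C, coeff_X_pow, hbase, hslope, -map_mul, -map_add]
      using congrArg (coeff · 2) hcross
  exact Prod.ext (Prod.ext hslope hheight) hbase

lemma injective_shearLine : Function.Injective (shearLine (F := F)) :=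
  injective_base_shearLine.of_comp

lemma meets_shearLine_iff {q r : (F × F) × F} :
    Meets (shearLine q) (shearLine r) ↔ q.1.1 * r.2 + q.1.2 = r.1.1 * q.2 + r.1.2 := by
  have hq := algebraMap_shearDen_ne_zero q
  have hr := algebraMap_shearDen_ne_zero r
  rw [← RatFunc.C_injective.eq_iff, Meets]
  simp only [shearLine]
  field_simp
  simp only [algebraMap_shearNum, algebraMap_shearDen, map_add, map_mul]
  constructor <;> intro h <;> linear_combination h

lemma onRegulus_shearLine_iff {q : (F × F) × F} {α β γ δ : RatFunc F} :
    OnRegulus α β γ δ (shearLine q) ↔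
      RatFunc.C q.1.1 =
        α * algebraMap F[X] (RatFunc F) (shearNum q) + γ * algebraMap F[X] _ (shearDen q) ∧
      RatFunc.C q.1.2 =
        β * algebraMap F[X] (RatFunc F) (shearNum q) + δ * algebraMap F[X] _ (shearDen q) := by
  have := algebraMap_shearDen_ne_zero q
  simp only [OnRegulus, shearLine]
  field_simp

lemma dual_apply_eq (φ : Module.Dual F ((F × F) × F)) (q : (F × F) × F) :
    φ q = q.1.1 * φ ((1, 0), 0) + q.1.2 * φ ((0, 1), 0) + q.2 * φ ((0, 0), 1) := by
  simp only [← smul_eq_mul, ← map_smul, ← map_add]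
  congr 1
  ext <;> simp

lemma collinear_of_onRegulus_shearLine {S : Set ((F × F) × F)} {α β γ δ : RatFunc F}
    (h : ∀ q ∈ S, OnRegulus α β γ δ (shearLine q)) : Collinear F S := by
  simp only [onRegulus_shearLine_iff] at h
  refine collinear_of_forall_exists_eq_mul_add_mul
    (B := fun q => algebraMap F[X] (RatFunc F) (shearNum q))
    (D := fun q => algebraMap F[X] (RatFunc F) (shearDen q))
    ⟨α * RatFunc.X ^ 2, 1 + γ * RatFunc.X ^ 2, fun q hq => ?_⟩ fun φ => ?_
  · linear_combination algebraMap_shearDen q - RatFunc.X ^ 2 * (h q hq).1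
  · let s := RatFunc.C (φ ((1, 0), 0))
    let t := RatFunc.C (φ ((0, 1), 0))
    let u := RatFunc.C (φ ((0, 0), 1))
    refine ⟨s * α + t * β + u * (1 + α * RatFunc.X + β * RatFunc.X ^ 2),
      s * γ + t * δ + u * (γ * RatFunc.X + δ * RatFunc.X ^ 2), fun q hq => ?_⟩
    rw [RatFunc.algebraMap_eq_C, dual_apply_eq φ q, map_add, map_add, map_mul, map_mul, map_mul]
    linear_combination (s + u * RatFunc.X) * (h q hq).1 + (t + u * RatFunc.X ^ 2) * (h q hq).2 -
      u * algebraMap_shearNum q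

end Shear

section FewRichMaps

variable {F : Type*} [Field F] [DecidableEq F] {A : Finset F} {G : Finset (F × F)} {k : ℕ}

lemma wellSpread_map_shearLine (hk : 2 ≤ k) (hG : ∀ g ∈ G, k ≤ richness A g) :
    WellSpread (A.card + 2 * (A.card : ℝ) ^ 2 / k)
      ((G ×ˢ A).map ⟨shearLine, injective_shearLine⟩) where
  injOn_base := by
    rw [Finset.coe_map]
    exact injective_base_shearLine.injOn.image_of_comp
  card_le α β γ δ S hS hreg := by
    obtain ⟨T, hT, rfl⟩ := Finset.subset_map_iff.mp hS
    rw [Finset.forall_mem_map] at hreg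
    rw [Finset.card_map]
    exact card_le_of_collinear hT hk hG (collinear_of_onRegulus_shearLine hreg)

lemma incidences_map_shearLine (S : Finset ((F × F) × F)) :
    incidences (S.map ⟨shearLine, injective_shearLine⟩) (S.map ⟨shearLine, injective_shearLine⟩) =
      {z ∈ S ×ˢ S | z.1.1.1 * z.2.2 + z.1.1.2 = z.2.1.1 * z.1.2 + z.2.1.2}.card := by
  classical
  simp only [incidences, Finset.bipartiteAbove, Finset.sum_map, Finset.filter_map, Finset.card_map,
    Function.comp_def, Function.Embedding.coeFn_mk, meets_shearLine_iff, Finset.card_filter,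
    Finset.sum_product]

lemma sq_card_mul_le_card_mul_incidences (hG : ∀ g ∈ G, k ≤ richness A g) :
    (G.card * k) ^ 2 ≤ A.card * incidences ((G ×ˢ A).map ⟨shearLine, injective_shearLine⟩)
      ((G ×ˢ A).map ⟨shearLine, injective_shearLine⟩) := by
  rw [incidences_map_shearLine, ← card_collisions_eq]
  exact sq_card_mul_le_card_mul_card_collisions hG

lemma le_div_pow_of_sq_mul_le {N A k C : ℝ} (hN : 0 < N) (hk : 0 < k) (hC : 1 ≤ C)
    (hkA : k ≤ A)
    (h : (N * k) ^ 2 ≤ A * (C * (√(N * A) * √(N * A) * (√(N * A) + √(N * A) +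
      (A + 2 * A ^ 2 / k))))) :
    N ≤ 16 * C ^ 2 * A ^ 5 / k ^ 4 := by
  have hA : 0 < A := hk.trans_le hkA
  obtain ⟨s, hs⟩ : ∃ s, s = √(N * A) := ⟨_, rfl⟩
  have hs_sq : s * s = N * A := hs ▸ Real.mul_self_sqrt (by positivity)
  have hs_nonneg : 0 ≤ s := hs ▸ Real.sqrt_nonneg _
  rw [← hs, hs_sq] at h
  have hspread : A + 2 * A ^ 2 / k ≤ 3 * A ^ 2 / k := by
    rw [le_div_iff₀ hk, add_mul, div_mul_cancel₀ _ hk.ne']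
    nlinarith
  have hmain : N * k ^ 2 ≤ C * A ^ 2 * (2 * s + 3 * A ^ 2 / k) := by
    refine le_of_mul_le_mul_left ?_ hN
    calc N * (N * k ^ 2) = (N * k) ^ 2 := by ring
      _ ≤ A * (C * (N * A * (s + s + 3 * A ^ 2 / k))) := h.trans (by gcongr)
      _ = N * (C * A ^ 2 * (2 * s + 3 * A ^ 2 / k)) := by ring
  rw [le_div_iff₀ (by positivity)]
  rcases le_total (3 * A ^ 2 / k) (2 * s) with hle | hle
  · refine le_of_mul_le_mul_left ?_ hN
    calc N * (N * k ^ 4) = (N * k ^ 2) ^ 2 := by ring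
      _ ≤ (C * A ^ 2 * (2 * s + 2 * s)) ^ 2 :=
        pow_le_pow_left₀ (by positivity) (hmain.trans (by gcongr)) 2
      _ = 16 * C ^ 2 * A ^ 4 * (s * s) := by ring
      _ = N * (16 * C ^ 2 * A ^ 5) := by rw [hs_sq]; ring
  · have hmain' : N * k ^ 2 * k ≤ 6 * C * A ^ 4 := by
      rw [← le_div_iff₀ hk]
      calc N * k ^ 2 ≤ C * A ^ 2 * (3 * A ^ 2 / k + 3 * A ^ 2 / k) := hmain.trans (by gcongr)
        _ = 6 * C * A ^ 4 / k := by ring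
    calc N * k ^ 4 = N * k ^ 2 * k * k := by ring
      _ ≤ 6 * C * A ^ 4 * A := by gcongr
      _ = 6 * C * A ^ 5 := by ring
      _ ≤ 16 * C ^ 2 * A ^ 5 := by
          gcongr ?_ * _
          nlinarith

theorem card_le_of_forall_le_richness {p : ℕ} (hp : ∀ k : ℕ, 0 < k → k < p → (k : F) ≠ 0)
    (hk : 2 ≤ k) (hG : ∀ g ∈ G, k ≤ richness A g) (hcard : G.card * A.card ≤ p ^ 2) :
    (G.card : ℝ) ≤ 16 * 20000000 ^ 2 * (A.card : ℝ) ^ 5 / (k : ℝ) ^ 4 := by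
  rcases G.eq_empty_or_nonempty with rfl | ⟨g, hg⟩
  · rw [Finset.card_empty, Nat.cast_zero]
    positivity
  have : Infinite (RatFunc F) :=
    Infinite.of_injective _ (RatFunc.algebraMap_injective F)
  have hp' (j : ℕ) (hj : 0 < j) (hjp : j < p) : (j : RatFunc F) ≠ 0 := by
    rw [← map_natCast (RatFunc.C (K := F)), map_ne_zero]
    exact hp j hj hjp
  have hspread := wellSpread_map_shearLine hk hG
  have hinc := incidences_le hp' hspread hspread (by simpa using hcard)
  rw [Finset.card_map, Finset.card_product, Nat.cast_mul] at hinc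
  have hN : 0 < G.card := Finset.card_pos.mpr ⟨g, hg⟩
  refine le_div_pow_of_sq_mul_le (mod_cast hN) (by positivity) (by norm_num)
    (mod_cast (hG g hg).trans (richness_le_card A g)) ?_
  have hcs := Nat.cast_le (α := ℝ).mpr (sq_card_mul_le_card_mul_incidences hG)
  push_cast at hcs
  exact hcs.trans (by gcongr)

end FewRichMaps

section MapsThroughTwoPoints

variable {F : Type*} [Field F]

lemma eq_of_apply_eq_of_apply_eq {g g' : F × F} {x y : F} (hxy : x ≠ y)
    (hx : g.1 * x + g.2 = g'.1 * x + g'.2) (hy : g.1 * y + g.2 = g'.1 * y + g'.2) : g = g' := by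
  have hslope : g.1 = g'.1 :=
    mul_right_cancel₀ (sub_ne_zero.mpr hxy) (by linear_combination hx - hy)
  exact Prod.ext hslope (by linear_combination hx - x * hslope)

end MapsThroughTwoPoints

section RichMapsFinite

variable {F : Type*} [Field F] [DecidableEq F] [Fintype F]

lemma card_filter_apply_eq (x y : F) :
    (Finset.univ.filter fun g : F × F => g.1 * x + g.2 = y).card = Fintype.card F := by
  rw [← Finset.card_univ]
  refine Finset.card_nbij' Prod.fst (fun a => (a, y - a * x)) (by simp) (by simp [Set.MapsTo]) ?_
    (fun _ _ => rfl)
  intro g hg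
  exact Prod.ext rfl (by linear_combination -(Finset.mem_filter.mp hg).2)

lemma card_filter_apply_eq_and_apply_eq_le (q r : F × F) :
    (Finset.univ.filter fun g : F × F => g.1 * q.1 + g.2 = q.2 ∧ g.1 * r.1 + g.2 = r.2).card ≤
      (if q = r then Fintype.card F else 0) + 1 := by
  split_ifs with hqr
  · simp only [hqr, and_self, card_filter_apply_eq, Nat.le_succ]
  · rw [zero_add, Finset.card_le_one]
    intro g hg g' hg'
    simp only [Finset.mem_filter_univ] at hg hg'
    refine eq_of_apply_eq_of_apply_eq (x := q.1) (y := r.1) (fun hfst => hqr (Prod.ext hfst ?_))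
      (hg.1.trans hg'.1.symm) (hg.2.trans hg'.2.symm)
    rw [← hg.1, ← hg.2, hfst]

variable (A : Finset F)

lemma sum_richness_univ : ∑ g, richness A g = Fintype.card F * A.card ^ 2 := by
  simp only [richness_eq_card_filter_product, Finset.card_filter]
  rw [Finset.sum_comm]
  simp only [← Finset.card_filter, card_filter_apply_eq, Finset.sum_const, Finset.card_product,
    smul_eq_mul]
  ring

lemma sum_sq_richness_univ_le :
    ∑ g, richness A g ^ 2 ≤ Fintype.card F * A.card ^ 2 + A.card ^ 4 := by
  have hsq (g : F × F) : richness A g ^ 2 = {z ∈ (A ×ˢ A) ×ˢ (A ×ˢ A) |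
      g.1 * z.1.1 + g.2 = z.1.2 ∧ g.1 * z.2.1 + g.2 = z.2.2}.card := by
    rw [richness_eq_card_filter_product, sq, ← Finset.card_product, ← Finset.filter_product]
  simp only [hsq, Finset.card_filter]
  rw [Finset.sum_comm]
  simp only [← Finset.card_filter]
  calc _ ≤ ∑ z ∈ (A ×ˢ A) ×ˢ (A ×ˢ A), ((if z.1 = z.2 then Fintype.card F else 0) + 1) :=
        Finset.sum_le_sum fun z _ => card_filter_apply_eq_and_apply_eq_le z.1 z.2
    _ = ∑ _q ∈ A ×ˢ A, (Fintype.card F + (A ×ˢ A).card) := by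
        rw [Finset.sum_product]
        refine Finset.sum_congr rfl fun q hq => ?_
        rw [Finset.sum_add_distrib, Finset.sum_ite_eq, if_pos hq, Finset.card_eq_sum_ones]
    _ = Fintype.card F * A.card ^ 2 + A.card ^ 4 := by
        rw [Finset.sum_const, Finset.card_product, smul_eq_mul]
        ring

lemma sum_sq_richness_sub_le :
    ∑ g, ((richness A g : ℝ) - (A.card : ℝ) ^ 2 / Fintype.card F) ^ 2 ≤
      Fintype.card F * (A.card : ℝ) ^ 2 := by
  have hcard : (Fintype.card F : ℝ) ≠ 0 := mod_cast Fintype.card_ne_zero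
  have hfirst : ∑ g, (richness A g : ℝ) = Fintype.card F * (A.card : ℝ) ^ 2 :=
    mod_cast sum_richness_univ A
  have hsecond : ∑ g, (richness A g : ℝ) ^ 2 ≤
      Fintype.card F * (A.card : ℝ) ^ 2 + (A.card : ℝ) ^ 4 :=
    mod_cast sum_sq_richness_univ_le A
  calc ∑ g, ((richness A g : ℝ) - (A.card : ℝ) ^ 2 / Fintype.card F) ^ 2
      = ∑ g, (richness A g : ℝ) ^ 2 - (A.card : ℝ) ^ 4 := by
        simp only [sub_sq, Finset.sum_add_distrib, Finset.sum_sub_distrib, ← Finset.mul_sum,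
          ← Finset.sum_mul, hfirst, Finset.sum_const, Finset.card_univ, Fintype.card_prod,
          nsmul_eq_mul, Nat.cast_mul]
        field_simp
        ring
    _ ≤ Fintype.card F * (A.card : ℝ) ^ 2 := by linarith

variable {A} {G : Finset (F × F)}

lemma card_mul_sq_le_of_forall_le_richness {k : ℝ} (hG : ∀ g ∈ G, k ≤ richness A g)
    (hk : 2 * (A.card : ℝ) ^ 2 / Fintype.card F ≤ k) :
    G.card * k ^ 2 ≤ 4 * Fintype.card F * (A.card : ℝ) ^ 2 := by
  have hk_nonneg : 0 ≤ k := hk.trans' (by positivity)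
  have hdev : ∑ _g ∈ G, (k / 2) ^ 2 ≤ Fintype.card F * (A.card : ℝ) ^ 2 :=
    calc ∑ _g ∈ G, (k / 2) ^ 2
        ≤ ∑ g ∈ G, ((richness A g : ℝ) - (A.card : ℝ) ^ 2 / Fintype.card F) ^ 2 := by
          gcongr with g hg
          linarith [hG g hg, mul_div_assoc 2 ((A.card : ℝ) ^ 2) (Fintype.card F)]
      _ ≤ ∑ g, ((richness A g : ℝ) - (A.card : ℝ) ^ 2 / Fintype.card F) ^ 2 :=
          Finset.sum_le_univ_sum_of_nonneg fun g => sq_nonneg _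
      _ ≤ _ := sum_sq_richness_sub_le A
  rw [Finset.sum_const, nsmul_eq_mul] at hdev
  linarith

end RichMapsFinite

section RichMapsPrimeField

variable {p : ℕ} [Fact p.Prime] {A : Finset (ZMod p)} {G : Finset (ZMod p × ZMod p)} {k : ℕ}

lemma card_le_of_forall_le_richness_of_card_mul_card_le (hk : 2 ≤ k)
    (hG : ∀ g ∈ G, k ≤ richness A g) (hsmall : G.card * A.card ≤ p ^ 2) :
    (G.card : ℝ) ≤ 16 * 20000000 ^ 2 * (A.card : ℝ) ^ 5 / (k : ℝ) ^ 4 := by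
  refine card_le_of_forall_le_richness (fun j hj hjp => ?_) hk hG hsmall
  rw [Ne, ZMod.natCast_eq_zero_iff]
  exact Nat.not_dvd_of_pos_of_lt hj hjp

lemma exists_subset_sq_le_two_mul_card_mul_card (hlarge : p ^ 2 ≤ G.card * A.card) :
    ∃ G' ⊆ G, G'.card * A.card ≤ p ^ 2 ∧ p ^ 2 ≤ 2 * (G'.card * A.card) := by
  have hp : 0 < p := (Fact.out : p.Prime).pos
  have hA : 0 < A.card := pos_of_mul_pos_right ((pow_pos hp 2).trans_le hlarge) (Nat.zero_le _)
  obtain ⟨G', hG', hcard⟩ := Finset.exists_subset_card_eq (s := G) (n := p ^ 2 / A.card)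
    (Nat.div_le_of_le_mul (by rwa [mul_comm]))
  have hAp : A.card ≤ p := by simpa only [ZMod.card] using Finset.card_le_univ A
  have hone : 1 ≤ p ^ 2 / A.card := (Nat.one_le_div_iff hA).mpr (hAp.trans (Nat.le_pow two_pos))
  refine ⟨G', hG', hcard ▸ Nat.div_mul_le_self _ _, hcard ▸ ?_⟩
  nlinarith [Nat.lt_div_mul_add (a := p ^ 2) hA]

lemma prime_mul_sq_le_of_forall_le_richness (hk : 2 ≤ k) (hG : ∀ g ∈ G, k ≤ richness A g)
    (hlarge : p ^ 2 ≤ G.card * A.card) :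
    (p : ℝ) * k ^ 2 ≤ 2 * (16 * 20000000 ^ 2) * (A.card : ℝ) ^ 3 := by
  obtain ⟨G', hG', hsmall, hp⟩ := exists_subset_sq_le_two_mul_card_mul_card hlarge
  have hcard := card_le_of_forall_le_richness_of_card_mul_card_le hk
    (fun g hg => hG g (hG' hg)) hsmall
  rw [le_div_iff₀ (by positivity)] at hcard
  refine (sq_le_sq₀ (by positivity) (by positivity)).mp ?_
  calc ((p : ℝ) * k ^ 2) ^ 2 = (p : ℝ) ^ 2 * (k : ℝ) ^ 4 := by ring
    _ ≤ 2 * (G'.card * A.card) * (k : ℝ) ^ 4 := by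
        gcongr
        exact_mod_cast hp
    _ = 2 * (A.card : ℝ) * (G'.card * (k : ℝ) ^ 4) := by ring
    _ ≤ 2 * (A.card : ℝ) * (16 * 20000000 ^ 2 * (A.card : ℝ) ^ 5) := by gcongr
    _ = 2 * (16 * 20000000 ^ 2) * (A.card : ℝ) ^ 6 := by ring
    _ ≤ (2 * (16 * 20000000 ^ 2)) ^ 2 * (A.card : ℝ) ^ 6 := by
        gcongr
        norm_num
    _ = (2 * (16 * 20000000 ^ 2) * (A.card : ℝ) ^ 3) ^ 2 := by ring

theorem card_le_of_forall_le_richness_zmod (hk : 2 ≤ k) (hG : ∀ g ∈ G, k ≤ richness A g)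
    (hkp : 2 * (A.card : ℝ) ^ 2 / p ≤ k) :
    (G.card : ℝ) ≤ 8 * (16 * 20000000 ^ 2) * (A.card : ℝ) ^ 5 / (k : ℝ) ^ 4 := by
  rcases le_total (G.card * A.card) (p ^ 2) with hsmall | hlarge
  · refine (card_le_of_forall_le_richness_of_card_mul_card_le hk hG hsmall).trans ?_
    gcongr ?_ * _ / _
    norm_num
  · have hp := prime_mul_sq_le_of_forall_le_richness hk hG hlarge
    have hvar := card_mul_sq_le_of_forall_le_richness (k := k) (fun g hg => mod_cast hG g hg)
      (by rwa [ZMod.card])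
    rw [ZMod.card] at hvar
    rw [le_div_iff₀ (by positivity)]
    calc (G.card : ℝ) * k ^ 4 = G.card * k ^ 2 * k ^ 2 := by ring
      _ ≤ 4 * p * (A.card : ℝ) ^ 2 * k ^ 2 := by gcongr
      _ = 4 * (A.card : ℝ) ^ 2 * (p * k ^ 2) := by ring
      _ ≤ 4 * (A.card : ℝ) ^ 2 * (2 * (16 * 20000000 ^ 2) * (A.card : ℝ) ^ 3) := by gcongr
      _ = _ := by ring

end RichMapsPrimeField

section MonotonePairs

lemma card_le_card_add_card_offDiag_collisions {ι κ : Type*} [DecidableEq κ]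
    {s : Finset ι} {t : Finset κ} {f : ι → κ} (hf : Set.MapsTo f s t) :
    s.card ≤ t.card + {z ∈ s.offDiag | f z.1 = f z.2}.card := by
  classical
  have hcollisions : ∑ y ∈ t, {i ∈ s | f i = y}.card ^ 2 =
      s.card + {z ∈ s.offDiag | f z.1 = f z.2}.card := by
    rw [sum_sq_card_fiber_eq hf, ← Finset.diag_union_offDiag, Finset.filter_union,
      Finset.card_union_of_disjoint
        (Finset.disjoint_filter_filter (Finset.disjoint_diag_offDiag s)),
      Finset.filter_true_of_mem fun z hz => congrArg f (Finset.mem_diag.mp hz).2,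
      Finset.diag_card]
  have hsum : ∑ y ∈ t, 2 * {i ∈ s | f i = y}.card ≤ ∑ y ∈ t, (1 + {i ∈ s | f i = y}.card ^ 2) := by
    gcongr with y
    nlinarith [Nat.le_self_pow two_ne_zero {i ∈ s | f i = y}.card]
  rw [← Finset.mul_sum, ← Finset.card_eq_sum_card_fiberwise hf, Finset.sum_add_distrib,
    ← Finset.card_eq_sum_ones, hcollisions] at hsum
  lia

variable {α : Type*} [LinearOrder α] {φ ψ : α → ℕ} {b : ℕ}

lemma eq_and_eq_of_add_eq_add (hφ : Monotone φ) (hψ : Monotone ψ) {x y : α}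
    (h : φ x + ψ x = φ y + ψ y) : φ x = φ y ∧ ψ x = ψ y := by
  rcases le_total x y with hxy | hxy <;> have := hφ hxy <;> have := hψ hxy <;> lia

lemma card_le_add_card_offDiag_of_monotone (hφ : Monotone φ) (hψ : Monotone ψ)
    (hφb : ∀ x, φ x ≤ b) (hψb : ∀ x, ψ x ≤ b) (s : Finset α) :
    s.card ≤ 2 * b + 1 + {z ∈ s.offDiag | φ z.1 = φ z.2 ∧ ψ z.1 = ψ z.2}.card := by
  have hmaps : Set.MapsTo (fun x => φ x + ψ x) s (Finset.range (2 * b + 1)) := fun x _ => by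
    have := hφb x
    have := hψb x
    simp only [Finset.coe_range, Set.mem_Iio]
    lia
  refine (card_le_card_add_card_offDiag_collisions hmaps).trans ?_
  rw [Finset.card_range]
  gcongr with z
  exact eq_and_eq_of_add_eq_add hφ hψ

lemma card_le_add_card_offDiag_of_antitone (hφ : Monotone φ) (hψ : Antitone ψ)
    (hφb : ∀ x, φ x ≤ b) (hψb : ∀ x, ψ x ≤ b) (s : Finset α) :
    s.card ≤ 2 * b + 1 + {z ∈ s.offDiag | φ z.1 = φ z.2 ∧ ψ z.1 = ψ z.2}.card := by
  have hsub : Monotone fun x => b - ψ x := fun x y hxy => Nat.sub_le_sub_left (hψ hxy) b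
  refine (card_le_add_card_offDiag_of_monotone hφ hsub hφb (fun x => Nat.sub_le b _) s).trans ?_
  refine Nat.add_le_add_left (Finset.card_le_card (Finset.monotone_filter_right _ ?_)) _
  rintro z - ⟨hz, hz'⟩
  have := hψb z.1
  have := hψb z.2
  exact ⟨hz, by lia⟩

end MonotonePairs

section Blocks

variable {α : Type*} [LinearOrder α]

/-- The index of the block containing `x` when `A` is cut, in increasing order, into consecutive
blocks of `w` elements. -/
def blockIndex (A : Finset α) (w : ℕ) (x : α) : ℕ :=
  {a ∈ A | a < x}.card / w

variable (A : Finset α) (w : ℕ)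

lemma monotone_blockIndex : Monotone (blockIndex A w) := fun _ _ hxy =>
  Nat.div_le_div_right (Finset.card_le_card
    (Finset.monotone_filter_right A fun _ _ ha => ha.trans_le hxy))

lemma blockIndex_le (x : α) : blockIndex A w x ≤ A.card / w :=
  Nat.div_le_div_right (Finset.card_filter_le _ _)

lemma injOn_card_filter_lt : Set.InjOn (fun x => {a ∈ A | a < x}.card) A := by
  refine StrictMonoOn.injOn fun x hx y _ hxy => Finset.card_lt_card ?_
  rw [Finset.ssubset_iff_of_subset (Finset.monotone_filter_right A fun _ _ ha => ha.trans hxy)]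
  exact ⟨x, Finset.mem_filter.mpr ⟨hx, hxy⟩, by simp⟩

variable {w}

lemma card_filter_blockIndex_eq_le (hw : 0 < w) (j : ℕ) :
    {x ∈ A | blockIndex A w x = j}.card ≤ w := by
  calc {x ∈ A | blockIndex A w x = j}.card
      ≤ (Finset.Ico (j * w) (j * w + w)).card := by
        refine Finset.card_le_card_of_injOn (fun x => {a ∈ A | a < x}.card) (fun x hx => ?_)
          ((injOn_card_filter_lt A).mono (Finset.filter_subset _ _))
        have := (Nat.div_eq_iff hw).mp (Finset.mem_filter.mp hx).2
        simp only [Finset.coe_Ico, Set.mem_Ico]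
        lia
    _ = w := by simp

end Blocks

section RichMapsOrdered

variable {F : Type*} [Field F] [LinearOrder F]

/-- The pairs of distinct points of `A` that lie in a common block and that `g` sends to points of
`A` lying in a common block. -/
def closePairs (A : Finset F) (w : ℕ) (g : F × F) : Finset (F × F) :=
  {z ∈ {x ∈ A | g.1 * x + g.2 ∈ A}.offDiag | blockIndex A w z.1 = blockIndex A w z.2 ∧
    blockIndex A w (g.1 * z.1 + g.2) = blockIndex A w (g.1 * z.2 + g.2)}

variable {A : Finset F} {G : Finset (F × F)} {k w : ℕ}

lemma sum_card_closePairs_le (A : Finset F) (G : Finset (F × F)) (hw : 0 < w) :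
    ∑ g ∈ G, (closePairs A w g).card ≤ A.card ^ 2 * w ^ 2 := by
  let block (x : F) : Finset F := {a ∈ A | blockIndex A w a = blockIndex A w x}
  calc ∑ g ∈ G, (closePairs A w g).card = (G.sigma (closePairs A w)).card := by
        rw [Finset.card_sigma]
    _ ≤ ((A ×ˢ A).sigma fun q => block q.1 ×ˢ block q.2).card := by
        refine Finset.card_le_card_of_injOn
          (fun s => ⟨(s.2.1, s.1.1 * s.2.1 + s.1.2), (s.2.2, s.1.1 * s.2.2 + s.1.2)⟩) ?_ ?_
        · rintro ⟨g, x, y⟩ hs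
          simp only [Finset.coe_sigma, Set.mem_sigma_iff, Finset.mem_coe, closePairs, block,
            Finset.mem_filter, Finset.mem_offDiag, Finset.mem_product] at hs ⊢
          grind
        · rintro ⟨g, x, y⟩ hs ⟨g', x', y'⟩ - heq
          simp only [Sigma.mk.injEq, Prod.mk.injEq, heq_eq_eq] at heq
          obtain ⟨⟨rfl, hx⟩, rfl, hy⟩ := heq
          have hxy : x ≠ y := by
            simp only [Finset.coe_sigma, Set.mem_sigma_iff, Finset.mem_coe, closePairs,
              Finset.mem_filter, Finset.mem_offDiag] at hs
            exact hs.2.1.2.2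
          rw [eq_of_apply_eq_of_apply_eq hxy hx hy]
    _ = ∑ q ∈ A ×ˢ A, (block q.1).card * (block q.2).card := by
        simp only [Finset.card_sigma, Finset.card_product]
    _ ≤ ∑ _q ∈ A ×ˢ A, w * w := by
        gcongr <;> exact card_filter_blockIndex_eq_le A hw _
    _ = A.card ^ 2 * w ^ 2 := by
        rw [Finset.sum_const, Finset.card_product, smul_eq_mul, sq, sq]

variable [IsStrictOrderedRing F]

lemma richness_le_add_card_closePairs (A : Finset F) (w : ℕ) {g : F × F} (hg : g.1 ≠ 0) :
    richness A g ≤ 2 * (A.card / w) + 1 + (closePairs A w g).card := by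
  have hφ := monotone_blockIndex A w
  rw [richness, closePairs]
  rcases hg.lt_or_gt with hneg | hpos
  · have hψ : Antitone fun x => blockIndex A w (g.1 * x + g.2) := fun x y hxy =>
      hφ (add_le_add_left (mul_le_mul_of_nonpos_left hxy hneg.le) g.2)
    exact card_le_add_card_offDiag_of_antitone hφ hψ (blockIndex_le A w)
      (fun x => blockIndex_le A w _) _
  · have hψ : Monotone fun x => blockIndex A w (g.1 * x + g.2) := fun x y hxy =>
      hφ (add_le_add_left (mul_le_mul_of_nonneg_left hxy hpos.le) g.2)
    exact card_le_add_card_offDiag_of_monotone hφ hψ (blockIndex_le A w)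
      (fun x => blockIndex_le A w _) _

lemma card_mul_le_of_forall_le_richness (hG₀ : ∀ g ∈ G, g.1 ≠ 0)
    (hG : ∀ g ∈ G, k ≤ richness A g) (hw : 0 < w) (hwk : 2 * (2 * (A.card / w) + 1) ≤ k) :
    G.card * k ≤ 2 * (A.card ^ 2 * w ^ 2) := by
  calc G.card * k ≤ ∑ g ∈ G, 2 * (closePairs A w g).card := by
        refine Finset.card_nsmul_le_sum _ _ _ fun g hg => ?_
        have := richness_le_add_card_closePairs A w (hG₀ g hg)
        have := hG g hg
        lia
    _ ≤ 2 * (A.card ^ 2 * w ^ 2) := by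
        rw [← Finset.mul_sum]
        gcongr
        exact sum_card_closePairs_le A G hw

theorem card_le_of_forall_le_richness_of_linearOrder (hG₀ : ∀ g ∈ G, g.1 ≠ 0) (hk : 4 ≤ k)
    (hG : ∀ g ∈ G, k ≤ richness A g) :
    (G.card : ℝ) ≤ 162 * (A.card : ℝ) ^ 4 / (k : ℝ) ^ 3 := by
  rcases G.eq_empty_or_nonempty with rfl | ⟨g, hg⟩
  · rw [Finset.card_empty, Nat.cast_zero]
    positivity
  have hkA : k ≤ A.card := (hG g hg).trans (richness_le_card A g)
  obtain ⟨w, hw⟩ : ∃ w, w = 8 * A.card / k + 1 := ⟨_, rfl⟩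
  have hw_ge : 8 * A.card < w * k := by
    rw [hw, add_mul, one_mul]
    exact Nat.lt_div_mul_add (by lia)
  have hw_le : w * k ≤ 9 * A.card := by
    rw [hw, add_mul]
    linarith [Nat.div_mul_le_self (8 * A.card) k]
  have hwk : 2 * (2 * (A.card / w) + 1) ≤ k := by
    have : 8 * (A.card / w) ≤ k := by
      refine Nat.le_of_mul_le_mul_left (c := w) ?_ (by lia)
      linarith [Nat.mul_div_le A.card w]
    lia
  have hcount : (G.card : ℝ) * k ≤ 2 * ((A.card : ℝ) ^ 2 * (w : ℝ) ^ 2) :=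
    mod_cast card_mul_le_of_forall_le_richness hG₀ hG (by lia) hwk
  rw [le_div_iff₀ (by positivity)]
  calc (G.card : ℝ) * (k : ℝ) ^ 3 = G.card * k * (k : ℝ) ^ 2 := by ring
    _ ≤ 2 * ((A.card : ℝ) ^ 2 * (w : ℝ) ^ 2) * (k : ℝ) ^ 2 := by gcongr
    _ = 2 * (A.card : ℝ) ^ 2 * (w * k) ^ 2 := by ring
    _ ≤ 2 * (A.card : ℝ) ^ 2 * (9 * A.card) ^ 2 := by
        gcongr ?_ * ?_ ^ 2
        exact_mod_cast hw_le
    _ = 162 * (A.card : ℝ) ^ 4 := by ring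

end RichMapsOrdered

/-! ### From rich maps to the image set -/

section Dyadic

variable {ι : Type*} {s : Finset ι} {f : ι → ℕ} {C : ℝ} {d k : ℕ}

lemma sum_sq_filter_le_add (s : Finset ι) (f : ι → ℕ) (k : ℕ) :
    ∑ i ∈ s with k ≤ f i, (f i : ℝ) ^ 2 ≤
      ∑ i ∈ s with 2 * k ≤ f i, (f i : ℝ) ^ 2 + {i ∈ s | k ≤ f i}.card * (2 * k : ℝ) ^ 2 := by
  rw [← nsmul_eq_mul, ← Finset.sum_const, Finset.sum_filter, Finset.sum_filter, Finset.sum_filter,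
    ← Finset.sum_add_distrib]
  refine Finset.sum_le_sum fun i _ => ?_
  split_ifs with hk h2k h2k
  · exact le_add_of_nonneg_right (by positivity)
  · rw [zero_add]
    gcongr
    exact_mod_cast (not_le.mp h2k).le
  · positivity
  · simp

lemma sum_sq_filter_le_of_card_filter_le (hd : d ≠ 0) (hk : 0 < k)
    (hs : ∀ j, k ≤ j → ({i ∈ s | j ≤ f i}.card : ℝ) ≤ C / (j : ℝ) ^ (d + 2)) :
    ∑ i ∈ s with k ≤ f i, (f i : ℝ) ^ 2 ≤ 8 * C / (k : ℝ) ^ d := by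
  have hC : 0 ≤ C := by
    by_contra! hC
    have hneg : C / (k : ℝ) ^ (d + 2) < 0 := div_neg_of_neg_of_pos hC (by positivity)
    exact (Nat.cast_nonneg _).not_gt ((hs k le_rfl).trans_lt hneg)
  induction hn : s.sup f + 1 - k using Nat.strong_induction_on generalizing k with
  | _ n ih =>
    rcases Nat.lt_or_ge (s.sup f) k with hlt | hle
    · rw [Finset.filter_false_of_mem fun i hi => ((Finset.le_sup hi).trans_lt hlt).not_ge,
        Finset.sum_empty]
      positivity
    have hdouble : ∑ i ∈ s with 2 * k ≤ f i, (f i : ℝ) ^ 2 ≤ 8 * C / (2 * k : ℝ) ^ d :=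
      mod_cast ih _ (by lia) (by lia) (fun j hj => hs j (by lia)) rfl
    have htwo : (2 : ℝ) ≤ 2 ^ d := le_self_pow₀ one_le_two hd
    calc ∑ i ∈ s with k ≤ f i, (f i : ℝ) ^ 2
        ≤ 8 * C / (2 * k : ℝ) ^ d + C / (k : ℝ) ^ (d + 2) * (2 * k : ℝ) ^ 2 := by
          refine (sum_sq_filter_le_add s f k).trans ?_
          gcongr
          exact hs k le_rfl
      _ = 8 * C / 2 ^ d / (k : ℝ) ^ d + 4 * C / (k : ℝ) ^ d := by field
      _ ≤ 8 * C / 2 / (k : ℝ) ^ d + 4 * C / (k : ℝ) ^ d := by gcongr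
      _ = 8 * C / (k : ℝ) ^ d := by ring

end Dyadic

section Energy

variable {F : Type*} [Field F]

/-- The quotient `l⁻¹ ∘ l'` of a pair `(l, l')` of affine transformations. -/
noncomputable def quotientMap (z : (F × F) × (F × F)) : F × F :=
  acomp (ainv z.1) z.2

lemma quotientMap_apply_eq {l l' : F × F} {x x' : F} (hl : l.1 ≠ 0)
    (h : l.1 * x + l.2 = l'.1 * x' + l'.2) :
    (quotientMap (l, l')).1 * x' + (quotientMap (l, l')).2 = x := by
  simp only [quotientMap, acomp, ainv]
  field_simp
  linear_combination -h

lemma quotientMap_fst_ne_zero {l l' : F × F} (hl : l.1 ≠ 0) (hl' : l'.1 ≠ 0) :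
    (quotientMap (l, l')).1 ≠ 0 :=
  mul_ne_zero (inv_ne_zero hl) hl'

variable {A : Finset F} {L : Finset (F × F)}

lemma affEnergy_eq_card_collisions [DecidableEq F] (L : Finset (F × F)) :
    affEnergy L = {q ∈ (L ×ˢ L) ×ˢ (L ×ˢ L) | quotientMap q.1 = quotientMap q.2}.card := by
  rw [affEnergy, ← Set.ncard_coe_finset]
  refine Set.ncard_congr (fun q _ => ((q.1, q.2.1), q.2.2)) (fun q hq => ?_) (fun q q' _ _ h => ?_)
    fun q hq => ⟨(q.1.1, q.1.2, q.2), ?_, rfl⟩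
  · obtain ⟨hl₁, hl₂, hl₁', hl₂', heq⟩ := hq
    simp only [Finset.coe_filter, Finset.mem_product, Set.mem_ofPred_eq]
    exact ⟨⟨⟨hl₁, hl₂⟩, hl₁', hl₂'⟩, heq⟩
  · grind
  · simp only [Finset.coe_filter, Finset.mem_product, Set.mem_ofPred_eq] at hq
    obtain ⟨⟨⟨hl₁, hl₂⟩, hl₁', hl₂'⟩, heq⟩ := hq
    exact ⟨hl₁, hl₂, hl₁', hl₂', heq⟩

lemma affEnergy_pos (hL : L.Nonempty) : 0 < affEnergy L := by
  classical
  obtain ⟨l, hl⟩ := hL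
  rw [affEnergy_eq_card_collisions, Finset.card_pos]
  exact ⟨((l, l), (l, l)), by simp [hl]⟩

variable [DecidableEq F]

lemma card_imSet_pos (hA : A.Nonempty) (hL : L.Nonempty) : 0 < (imSet L A).card :=
  ((hL.product hA).image _).card_pos

lemma sq_card_mul_card_le_card_imSet_mul_sum_richness (A : Finset F) (hL : ∀ l ∈ L, l.1 ≠ 0) :
    (L.card * A.card) ^ 2 ≤ (imSet L A).card * ∑ z ∈ L ×ˢ L, richness A (quotientMap z) := by
  rw [← Finset.card_product]
  refine (sq_card_le_card_mul_card_collisions (t := imSet L A)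
    fun q hq => Finset.mem_image_of_mem (fun q : (F × F) × F => q.1.1 * q.2 + q.1.2) hq).trans ?_
  gcongr
  simp only [richness, ← Finset.card_sigma]
  refine Finset.card_le_card_of_injOn (fun q => ⟨(q.1.1, q.2.1), q.2.2⟩) ?_ ?_
  · rintro ⟨⟨l, x⟩, l', x'⟩ hq
    simp only [Finset.coe_filter, Finset.mem_product, Set.mem_ofPred_eq] at hq
    obtain ⟨⟨⟨hl, hx⟩, hl', hx'⟩, heq⟩ := hq
    simp only [Finset.coe_sigma, Set.mem_sigma_iff, Finset.mem_coe, Finset.mem_product,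
      Finset.mem_filter, quotientMap_apply_eq (hL l hl) heq]
    exact ⟨⟨hl, hl'⟩, hx', hx⟩
  · rintro ⟨⟨l, x⟩, l', x'⟩ hq ⟨⟨m, y⟩, m', y'⟩ hq' h
    simp only [Finset.coe_filter, Finset.mem_product, Set.mem_ofPred_eq] at hq hq'
    simp only [Sigma.mk.injEq, Prod.mk.injEq, heq_eq_eq] at h
    obtain ⟨⟨rfl, rfl⟩, rfl⟩ := h
    rw [← quotientMap_apply_eq (hL l hq.1.1.1) hq.2, ← quotientMap_apply_eq (hL l hq.1.1.1) hq'.2]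

lemma sum_richness_quotientMap_le_add (A : Finset F) (L : Finset (F × F)) (k : ℕ) :
    ∑ z ∈ L ×ˢ L, richness A (quotientMap z) ≤
      k * L.card ^ 2 + ∑ z ∈ L ×ˢ L with k ≤ richness A (quotientMap z),
        richness A (quotientMap z) := by
  calc ∑ z ∈ L ×ˢ L, richness A (quotientMap z)
      ≤ ∑ z ∈ L ×ˢ L, (k + if k ≤ richness A (quotientMap z)
          then richness A (quotientMap z) else 0) := by
        gcongr with z
        split_ifs <;> lia
    _ = _ := by
        rw [Finset.sum_add_distrib, Finset.sum_const, Finset.card_product, smul_eq_mul,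
          Finset.sum_filter]
        ring

lemma sq_sum_rich_le_affEnergy_mul (A : Finset F) (L : Finset (F × F)) (k : ℕ) :
    (∑ z ∈ L ×ˢ L with k ≤ richness A (quotientMap z), (richness A (quotientMap z) : ℝ)) ^ 2 ≤
      affEnergy L * ∑ g ∈ (L ×ˢ L).image quotientMap with k ≤ richness A g,
        (richness A g : ℝ) ^ 2 := by
  rw [affEnergy_eq_card_collisions]
  let richPairs : Finset ((F × F) × (F × F)) := {z ∈ L ×ˢ L | k ≤ richness A (quotientMap z)}
  let richMaps : Finset (F × F) := {g ∈ (L ×ˢ L).image quotientMap | k ≤ richness A g}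
  have hmaps : Set.MapsTo (quotientMap (F := F)) richPairs richMaps := fun z hz => by
    obtain ⟨hzL, hzk⟩ := Finset.mem_filter.mp hz
    exact Finset.mem_filter.mpr ⟨Finset.mem_image_of_mem _ hzL, hzk⟩
  refine (sq_sum_comp_le_card_collisions_mul_sum_sq hmaps fun g => (richness A g : ℝ)).trans ?_
  gcongr <;> exact Finset.filter_subset _ _

/-- The richness bound of exponent `d + 2` and constant `C` from the threshold `k` on: for `j ≥ k`,
at most `C / j ^ (d + 2)` nonconstant affine maps send at least `j` points of `A` into `A`. -/
def RichMapsBound (A : Finset F) (C : ℝ) (d k : ℕ) : Prop :=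
  ∀ j, k ≤ j → ∀ G : Finset (F × F), (∀ g ∈ G, g.1 ≠ 0) → (∀ g ∈ G, j ≤ richness A g) →
    (G.card : ℝ) ≤ C / (j : ℝ) ^ (d + 2)

lemma RichMapsBound.sum_sq_richness_le {C : ℝ} {d k : ℕ} (hA : RichMapsBound A C d k) (hd : d ≠ 0)
    (hk : 0 < k) (hL : ∀ l ∈ L, l.1 ≠ 0) :
    ∑ g ∈ (L ×ˢ L).image quotientMap with k ≤ richness A g, (richness A g : ℝ) ^ 2 ≤
      8 * C / (k : ℝ) ^ d := by
  refine sum_sq_filter_le_of_card_filter_le hd hk fun j hj => hA j hj _ (fun g hg => ?_)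
    fun g hg => (Finset.mem_filter.mp hg).2
  obtain ⟨z, hz, rfl⟩ := Finset.mem_image.mp (Finset.mem_filter.mp hg).1
  rw [Finset.mem_product] at hz
  exact quotientMap_fst_ne_zero (hL _ hz.1) (hL _ hz.2)

lemma sq_card_mul_card_le_two_mul_sum_rich {k : ℕ} (hL : ∀ l ∈ L, l.1 ≠ 0)
    (hk : 2 * k * (imSet L A).card ≤ A.card ^ 2) :
    (L.card * A.card) ^ 2 ≤ 2 * ((imSet L A).card *
      ∑ z ∈ L ×ˢ L with k ≤ richness A (quotientMap z), richness A (quotientMap z)) := by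
  have hsum := (sq_card_mul_card_le_card_imSet_mul_sum_richness A hL).trans
    (Nat.mul_le_mul_left _ (sum_richness_quotientMap_le_add A L k))
  have hpoor := Nat.mul_le_mul_right (L.card ^ 2) hk
  linarith

theorem RichMapsBound.pow_card_mul_pow_card_le {C : ℝ} {d k : ℕ} (hA : RichMapsBound A C d k)
    (hd : d ≠ 0) (hk : 0 < k) (hL : ∀ l ∈ L, l.1 ≠ 0)
    (hkY : 2 * k * (imSet L A).card ≤ A.card ^ 2) :
    (L.card : ℝ) ^ 4 * (A.card : ℝ) ^ 4 * (k : ℝ) ^ d ≤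
      32 * C * affEnergy L * ((imSet L A).card : ℝ) ^ 2 := by
  let R : ℝ := ∑ z ∈ L ×ˢ L with k ≤ richness A (quotientMap z), (richness A (quotientMap z) : ℝ)
  have hR : R ^ 2 ≤ affEnergy L * (8 * C / (k : ℝ) ^ d) :=
    (sq_sum_rich_le_affEnergy_mul A L k).trans (by gcongr; exact hA.sum_sq_richness_le hd hk hL)
  have himage : ((L.card : ℝ) * A.card) ^ 2 ≤ 2 * ((imSet L A).card * R) :=
    by simp only [R]; exact_mod_cast sq_card_mul_card_le_two_mul_sum_rich hL hkY
  calc (L.card : ℝ) ^ 4 * (A.card : ℝ) ^ 4 * (k : ℝ) ^ d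
      = (((L.card : ℝ) * A.card) ^ 2) ^ 2 * (k : ℝ) ^ d := by ring
    _ ≤ (2 * ((imSet L A).card * R)) ^ 2 * (k : ℝ) ^ d := by gcongr
    _ = 4 * ((imSet L A).card : ℝ) ^ 2 * R ^ 2 * (k : ℝ) ^ d := by ring
    _ ≤ 4 * ((imSet L A).card : ℝ) ^ 2 * (affEnergy L * (8 * C / (k : ℝ) ^ d)) * (k : ℝ) ^ d := by
        gcongr
    _ = 32 * C * affEnergy L * ((imSet L A).card : ℝ) ^ 2 := by field

end Energy

section LowerBounds

lemma exists_threshold {a y : ℕ} (hy : 0 < y) (h : 8 * y ≤ a ^ 2) :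
    ∃ k : ℕ, 4 ≤ k ∧ 2 * k * y ≤ a ^ 2 ∧ a ^ 2 ≤ 4 * y * k := by
  have hfour : 4 ≤ a ^ 2 / (2 * y) := (Nat.le_div_iff_mul_le (by lia)).mpr (by lia)
  refine ⟨a ^ 2 / (2 * y), hfour, ?_, ?_⟩
  · linarith [Nat.div_mul_le_self (a ^ 2) (2 * y)]
  · nlinarith [Nat.lt_div_mul_add (a := a ^ 2) (b := 2 * y) (by lia)]

lemma rpow_one_div_le_mul_of_le_mul_pow {z c y : ℝ} {n : ℕ} (hn : n ≠ 0) (hz : 0 ≤ z) (hc : 1 ≤ c)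
    (hy : 0 ≤ y) (h : z ≤ c * y ^ n) : z ^ ((1 : ℝ) / n) ≤ c * y := by
  rw [one_div, Real.rpow_inv_le_iff_of_pos hz (by positivity) (by positivity), Real.rpow_natCast,
    mul_pow]
  refine h.trans ?_
  gcongr
  exact le_self_pow₀ hc hn

section LinearOrder

variable {F : Type*} [Field F] [LinearOrder F] [IsStrictOrderedRing F] {A : Finset F}
  {L : Finset (F × F)}

lemma sq_card_mul_pow_card_le_of_linearOrder (hA : A.Nonempty) (hL : L.Nonempty)
    (hL₀ : ∀ l ∈ L, l.1 ≠ 0) (hY : 8 * (imSet L A).card ≤ A.card ^ 2) :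
    (A.card : ℝ) ^ 2 * (L.card : ℝ) ^ 4 ≤
      128 * 162 * affEnergy L * ((imSet L A).card : ℝ) ^ 3 := by
  obtain ⟨k, hk, hkY, hAk⟩ := exists_threshold (card_imSet_pos hA hL) hY
  replace hAk : (A.card : ℝ) ^ 2 ≤ 4 * (imSet L A).card * k := mod_cast hAk
  have hrich : RichMapsBound A (162 * (A.card : ℝ) ^ 4) 1 k := fun j hj G hG₀ hG =>
    card_le_of_forall_le_richness_of_linearOrder hG₀ (hk.trans hj) hG
  have hbound := hrich.pow_card_mul_pow_card_le one_ne_zero (by lia) hL₀ hkY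
  have hA₀ : (0 : ℝ) < (A.card : ℝ) ^ 4 := pow_pos (mod_cast hA.card_pos) 4
  refine le_of_mul_le_mul_left ?_ hA₀
  calc (A.card : ℝ) ^ 4 * ((A.card : ℝ) ^ 2 * (L.card : ℝ) ^ 4)
      ≤ (A.card : ℝ) ^ 4 * (4 * (imSet L A).card * k * (L.card : ℝ) ^ 4) := by gcongr
    _ = 4 * (imSet L A).card * ((L.card : ℝ) ^ 4 * (A.card : ℝ) ^ 4 * (k : ℝ) ^ 1) := by ring
    _ ≤ 4 * (imSet L A).card * (32 * (162 * (A.card : ℝ) ^ 4) * affEnergy L *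
          ((imSet L A).card : ℝ) ^ 2) := by gcongr
    _ = (A.card : ℝ) ^ 4 * (128 * 162 * affEnergy L * ((imSet L A).card : ℝ) ^ 3) := by ring

theorem min_le_card_imSet_of_linearOrder (hA : A.Nonempty) (hL : L.Nonempty)
    (hL₀ : ∀ l ∈ L, l.1 ≠ 0) :
    min ((A.card : ℝ) ^ 2)
        (((A.card : ℝ) ^ 2 * (L.card : ℝ) ^ 4 / (affEnergy L : ℝ)) ^ ((1 : ℝ) / 3)) ≤
      128 * 162 * (imSet L A).card := by
  rcases le_total (A.card ^ 2) (8 * (imSet L A).card) with hle | hY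
  · have : (A.card : ℝ) ^ 2 ≤ 8 * (imSet L A).card := mod_cast hle
    exact min_le_of_left_le (by linarith)
  have hE : (0 : ℝ) < affEnergy L := mod_cast affEnergy_pos hL
  have hbound : (A.card : ℝ) ^ 2 * (L.card : ℝ) ^ 4 / affEnergy L ≤
      128 * 162 * ((imSet L A).card : ℝ) ^ 3 := by
    rw [div_le_iff₀ hE]
    linarith [sq_card_mul_pow_card_le_of_linearOrder hA hL hL₀ hY]
  have hroot := rpow_one_div_le_mul_of_le_mul_pow three_ne_zero (by positivity) (by norm_num)
    (by positivity) hbound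
  exact min_le_of_right_le (mod_cast hroot)

end LinearOrder

section ZMod

variable {p : ℕ} [Fact p.Prime] {A : Finset (ZMod p)} {L : Finset (ZMod p × ZMod p)}

lemma richMapsBound_zmod {k : ℕ} (hk : 2 ≤ k) (hkp : 2 * (A.card : ℝ) ^ 2 / p ≤ k) :
    RichMapsBound A (8 * (16 * 20000000 ^ 2) * (A.card : ℝ) ^ 5) 2 k := fun _ hj _ _ hG =>
  card_le_of_forall_le_richness_zmod (hk.trans hj) hG (hkp.trans (mod_cast hj))

lemma pow_card_mul_pow_card_le_zmod (hA : A.Nonempty) (hL : L.Nonempty) (hL₀ : ∀ l ∈ L, l.1 ≠ 0)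
    (hY : 8 * (imSet L A).card ≤ A.card ^ 2) (hYp : 8 * (imSet L A).card ≤ p) :
    (A.card : ℝ) ^ 3 * (L.card : ℝ) ^ 4 ≤
      512 * (8 * (16 * 20000000 ^ 2)) * affEnergy L * ((imSet L A).card : ℝ) ^ 4 := by
  obtain ⟨k, hk, hkY, hAk⟩ := exists_threshold (card_imSet_pos hA hL) hY
  replace hAk : (A.card : ℝ) ^ 2 ≤ 4 * (imSet L A).card * k := mod_cast hAk
  have hkp : 2 * (A.card : ℝ) ^ 2 / p ≤ k := by
    have hp : (0 : ℝ) < p := mod_cast (Fact.out : p.Prime).pos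
    rw [div_le_iff₀ hp]
    calc 2 * (A.card : ℝ) ^ 2 ≤ 2 * (4 * (imSet L A).card * k) := by gcongr
      _ = k * (8 * (imSet L A).card) := by ring
      _ ≤ k * p := by gcongr; exact_mod_cast hYp
  have hbound := (richMapsBound_zmod (by lia) hkp).pow_card_mul_pow_card_le two_ne_zero (by lia)
    hL₀ hkY
  have hA₀ : (0 : ℝ) < (A.card : ℝ) ^ 5 := pow_pos (mod_cast hA.card_pos) 5
  refine le_of_mul_le_mul_left ?_ hA₀
  calc (A.card : ℝ) ^ 5 * ((A.card : ℝ) ^ 3 * (L.card : ℝ) ^ 4)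
      = (A.card : ℝ) ^ 4 * (((A.card : ℝ) ^ 2) ^ 2 * (L.card : ℝ) ^ 4) := by ring
    _ ≤ (A.card : ℝ) ^ 4 * ((4 * (imSet L A).card * k) ^ 2 * (L.card : ℝ) ^ 4) := by gcongr
    _ = 16 * ((imSet L A).card : ℝ) ^ 2 * ((L.card : ℝ) ^ 4 * (A.card : ℝ) ^ 4 * (k : ℝ) ^ 2) := by
        ring
    _ ≤ 16 * ((imSet L A).card : ℝ) ^ 2 * (32 * (8 * (16 * 20000000 ^ 2) * (A.card : ℝ) ^ 5) *
          affEnergy L * ((imSet L A).card : ℝ) ^ 2) := by gcongr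
    _ = (A.card : ℝ) ^ 5 * (512 * (8 * (16 * 20000000 ^ 2)) * affEnergy L *
          ((imSet L A).card : ℝ) ^ 4) := by ring

theorem min_le_card_imSet_zmod (hA : A.Nonempty) (hL : L.Nonempty) (hL₀ : ∀ l ∈ L, l.1 ≠ 0) :
    min (p : ℝ) (min ((A.card : ℝ) ^ 2)
        (((A.card : ℝ) ^ 3 * (L.card : ℝ) ^ 4 / (affEnergy L : ℝ)) ^ ((1 : ℝ) / 4))) ≤
      512 * (8 * (16 * 20000000 ^ 2)) * (imSet L A).card := by
  rcases le_total p (8 * (imSet L A).card) with hle | hYp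
  · have : (p : ℝ) ≤ 8 * (imSet L A).card := mod_cast hle
    exact min_le_of_left_le (by linarith)
  rcases le_total (A.card ^ 2) (8 * (imSet L A).card) with hle | hY
  · have : (A.card : ℝ) ^ 2 ≤ 8 * (imSet L A).card := mod_cast hle
    exact min_le_of_right_le (min_le_of_left_le (by linarith))
  have hE : (0 : ℝ) < affEnergy L := mod_cast affEnergy_pos hL
  have hbound : (A.card : ℝ) ^ 3 * (L.card : ℝ) ^ 4 / affEnergy L ≤
      512 * (8 * (16 * 20000000 ^ 2)) * ((imSet L A).card : ℝ) ^ 4 := by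
    rw [div_le_iff₀ hE]
    linarith [pow_card_mul_pow_card_le_zmod hA hL hL₀ hY hYp]
  have hroot := rpow_one_div_le_mul_of_le_mul_pow four_ne_zero (by positivity) (by norm_num)
    (by positivity) hbound
  exact min_le_of_right_le (min_le_of_right_le (mod_cast hroot))

end ZMod

end LowerBounds

end AffineImage

theorem image_set_lower_bound_general :
    ∃ c : ℝ, 0 < c ∧
      ((∀ (F : Type*) [Field F] [LinearOrder F] [IsStrictOrderedRing F]
          (A : Finset F) (L : Finset (F × F)),
          A.Nonempty → L.Nonempty → (∀ l ∈ L, l.1 ≠ 0) →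
          c * min ((A.card : ℝ) ^ 2)
              (((A.card : ℝ) ^ 2 * (L.card : ℝ) ^ 4 / (affEnergy L : ℝ)) ^ ((1 : ℝ) / 3))
            ≤ ((imSet L A).card : ℝ)) ∧
       (∀ (p : ℕ) [Fact p.Prime],
          ∀ (A : Finset (ZMod p)) (L : Finset (ZMod p × ZMod p)),
          A.Nonempty → L.Nonempty → (∀ l ∈ L, l.1 ≠ 0) →
          c * min (p : ℝ) (min ((A.card : ℝ) ^ 2)
              (((A.card : ℝ) ^ 3 * (L.card : ℝ) ^ 4 / (affEnergy L : ℝ)) ^ ((1 : ℝ) / 4)))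
            ≤ ((imSet L A).card : ℝ))) := by
  refine ⟨(512 * (8 * (16 * 20000000 ^ 2)))⁻¹, by positivity, fun F _ _ _ A L hA hL hL₀ => ?_,
    fun p _ A L hA hL hL₀ => ?_⟩
  · rw [inv_mul_le_iff₀ (by positivity)]
    refine (AffineImage.min_le_card_imSet_of_linearOrder hA hL hL₀).trans ?_
    gcongr ?_ * _
    norm_num
  · rw [inv_mul_le_iff₀ (by positivity)]
    exact AffineImage.min_le_card_imSet_zmod hA hL hL₀

/-- **Corollary 3.6** (lower bound for the Schreier neighbourhood): there is an absolute
constant `c > 0` such that for every finite nonempty set of scalars `A` and every finite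
nonempty set `L` of affine transformations (with nonzero dilation parts), over `ℝ` one has
`|Im_L(A)| ≥ c·min{|A|², (|A|²|L|⁴/E(L))^{1/3}}`, and over `F_p` one has
`|Im_L(A)| ≥ c·min{p, |A|², (|A|³|L|⁴/E(L))^{1/4}}`. -/
theorem image_set_lower_bound :
    ∃ c : ℝ, 0 < c ∧
      ((∀ (A : Finset ℝ) (L : Finset (ℝ × ℝ)),
          A.Nonempty → L.Nonempty → (∀ l ∈ L, l.1 ≠ 0) →
          c * min ((A.card : ℝ) ^ 2)
              (((A.card : ℝ) ^ 2 * (L.card : ℝ) ^ 4 / (affEnergy L : ℝ)) ^ ((1 : ℝ) / 3))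
            ≤ ((imSet L A).card : ℝ)) ∧
       (∀ (p : ℕ) [Fact p.Prime],
          ∀ (A : Finset (ZMod p)) (L : Finset (ZMod p × ZMod p)),
          A.Nonempty → L.Nonempty → (∀ l ∈ L, l.1 ≠ 0) →
          c * min (p : ℝ) (min ((A.card : ℝ) ^ 2)
              (((A.card : ℝ) ^ 3 * (L.card : ℝ) ^ 4 / (affEnergy L : ℝ)) ^ ((1 : ℝ) / 4)))
            ≤ ((imSet L A).card : ℝ))) := by
  obtain ⟨c, hc, hordered, hzmod⟩ := image_set_lower_bound_general
  exact ⟨c, hc, hordered ℝ, hzmod⟩
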